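/- Let k be a positive integer. For all series f, g ∈ ℂ₀⟨⟨z₁,…,z_k⟩⟩ one has Reta(f ⊡ g) = Reta(f) ⊡ Reta(g), where ⊡ denotes boxed convolution. (Equivalently, in terms of distributions: η_{μ ⊠ ν} = η_μ ⊡ η_ν for all μ, ν ∈ D_alg(k), where μ ⊠ ν is the free multiplicative convolution, determined by R_{μ⊠ν} = R_μ ⊡ R_ν.) -/

import Mathlib

open Finset

attribute [local instance] Classical.propDecidable

open scoped ComplexOrder

namespace BBP

/-- Partitions of `{1,…,m}` modeled as `Finpartition`s of `univ : Finset (Fin m)`. -/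
abbrev FP (m : ℕ) := Finpartition (Finset.univ : Finset (Fin m))

noncomputable instance (m : ℕ) : Fintype (FP m) :=
  Fintype.ofInjective (fun π : FP m => π.parts) fun a b h => by
    cases a; cases b; simpa using h

/-- `x` is the minimum of the set `C`. -/
def IsMinOf {m : ℕ} (x : Fin m) (C : Finset (Fin m)) : Prop :=
  x ∈ C ∧ ∀ y ∈ C, x ≤ y

/-- `x` is the maximum of the set `C`. -/
def IsMaxOf {m : ℕ} (x : Fin m) (C : Finset (Fin m)) : Prop :=
  x ∈ C ∧ ∀ y ∈ C, y ≤ x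

/-- `a` and `b` lie in one block of `π`. -/
def SameBlock {m : ℕ} (π : FP m) (a b : Fin m) : Prop :=
  ∃ B ∈ π.parts, a ∈ B ∧ b ∈ B

/-- `π` is non-crossing: if `i<j<k<l`, `i,k` in one block and `j,l` in one block,
then all of them are in one block. -/
def IsNC {m : ℕ} (π : FP m) : Prop :=
  ∀ i j k l : Fin m, i < j → j < k → k < l →
    SameBlock π i k → SameBlock π j l → SameBlock π i j

/-- `A` embraces `B` : `min A ≤ min B` and `max B ≤ max A`. -/
def Embraces {m : ℕ} (A B : Finset (Fin m)) : Prop :=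
  ∃ a₁ a₂ b₁ b₂ : Fin m, IsMinOf a₁ A ∧ IsMaxOf a₂ A ∧ IsMinOf b₁ B ∧ IsMaxOf b₂ B ∧
    a₁ ≤ b₁ ∧ b₂ ≤ a₂

/-- `B` strictly embraces `A` : `min B < min A` and `max A < max B`. -/
def StrictlyEmbraces {m : ℕ} (B A : Finset (Fin m)) : Prop :=
  ∃ b₁ b₂ a₁ a₂ : Fin m, IsMinOf b₁ B ∧ IsMaxOf b₂ B ∧ IsMinOf a₁ A ∧ IsMaxOf a₂ A ∧
    b₁ < a₁ ∧ a₂ < b₂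

/-- `A` is an outer block of `π`. -/
def IsOuter {m : ℕ} (π : FP m) (A : Finset (Fin m)) : Prop :=
  A ∈ π.parts ∧ ¬ ∃ B ∈ π.parts, StrictlyEmbraces B A

/-- The number `|π|_out` of outer blocks of `π`. -/
noncomputable def numOuter {m : ℕ} (π : FP m) : ℕ :=
  (π.parts.filter fun A => IsOuter π A).card

/-- Reversed refinement order: every block of `ρ` is a union of blocks of `π`. -/
def Refines {m : ℕ} (π ρ : FP m) : Prop :=
  ∀ B ∈ π.parts, ∃ C ∈ ρ.parts, B ⊆ C

/-- The partial order `π ≪ ρ`. -/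
def Ll {m : ℕ} (π ρ : FP m) : Prop :=
  Refines π ρ ∧
    ∀ C ∈ ρ.parts, ∃ B ∈ π.parts, ∃ x y : Fin m,
      IsMinOf x C ∧ IsMaxOf y C ∧ x ∈ B ∧ y ∈ B

/-- The partition `1ₙ` of `{1,…,n+1}` with a single block. -/
noncomputable def fullPart (n : ℕ) : FP (n+1) :=
  Finpartition.indiscrete (by simpa using (Finset.univ_nonempty (α := Fin (n+1))).ne_empty)

/-- `π` is an interval partition. -/
def IsIntervalPartition {m : ℕ} (π : FP m) : Prop :=
  ∀ B ∈ π.parts, ∀ x ∈ B, ∀ z ∈ B, ∀ y : Fin m, x ≤ y → y ≤ z → y ∈ B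

/-- `σ` is the permutation associated to `π` : on each block `{b₁ < ⋯ < b_q}` it is the
cycle `b₁ ↦ b₂ ↦ ⋯ ↦ b_q ↦ b₁`. -/
def IsAssocPerm {m : ℕ} (π : FP m) (σ : Equiv.Perm (Fin m)) : Prop :=
  ∀ B ∈ π.parts, ∀ b ∈ B, σ b ∈ B ∧
    ((b < σ b ∧ ∀ x ∈ B, b < x → σ b ≤ x) ∨ (IsMaxOf b B ∧ IsMinOf (σ b) B))

/-- `κ` is the Kreweras complement of `π`, characterized by `P_κ = P_π⁻¹ ∘ P_{1ₙ}`,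
where `P_{1ₙ}` is the cycle `1 ↦ 2 ↦ ⋯ ↦ n ↦ 1` (i.e. `finRotate`). -/
def IsKrewerasPair {m : ℕ} (π κ : FP m) : Prop :=
  ∃ σπ σκ : Equiv.Perm (Fin m), IsAssocPerm π σπ ∧ IsAssocPerm κ σκ ∧
    σκ = σπ⁻¹ * finRotate m

/-- the element `2a-1` of `{1,…,2n}`, in `Fin (2n)` (0-indexed). -/
def oddEmb {n : ℕ} (a : Fin n) : Fin (2*n) := ⟨2*a.val, by have := a.isLt; omega⟩

/-- the element `2a` of `{1,…,2n}`, in `Fin (2n)` (0-indexed). -/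
def evenEmb {n : ℕ} (a : Fin n) : Fin (2*n) := ⟨2*a.val + 1, by have := a.isLt; omega⟩

/-- `θ = π^(odd) ∪ ρ^(even)` : the blocks of `θ` are the sets `{2a-1 : a ∈ A}` for `A`
a block of `π` and the sets `{2b : b ∈ B}` for `B` a block of `ρ`. -/
def IsOddEvenJoin {n : ℕ} (π ρ : FP n) (θ : FP (2*n)) : Prop :=
  θ.parts = π.parts.image (fun B => B.image oddEmb) ∪
    ρ.parts.image (fun B => B.image evenEmb)

/-- a block consisting of odd elements of `{1,…,2n}` (even 0-indexed values). -/
def OddBlock {m : ℕ} (B : Finset (Fin m)) : Prop := ∀ x ∈ B, x.val % 2 = 0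

/-- a block consisting of even elements of `{1,…,2n}` (odd 0-indexed values). -/
def EvenBlock {m : ℕ} (B : Finset (Fin m)) : Prop := ∀ x ∈ B, x.val % 2 = 1

/-- every block of `θ` is contained in the odds or in the evens. -/
def ParityPreserving {m : ℕ} (θ : FP m) : Prop :=
  ∀ B ∈ θ.parts, OddBlock B ∨ EvenBlock B

def OppositeParity {m : ℕ} (A B : Finset (Fin m)) : Prop :=
  (OddBlock A ∧ EvenBlock B) ∨ (EvenBlock A ∧ OddBlock B)

def SameParity {m : ℕ} (A B : Finset (Fin m)) : Prop :=
  (OddBlock A ∧ OddBlock B) ∨ (EvenBlock A ∧ EvenBlock B)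

/-- `P = Parent_θ(A)` : the unique block `P ≠ A` of `θ` embracing `A` such that every
block `A' ≠ A` of `θ` embracing `A` also embraces `P`. -/
def IsParent {m : ℕ} (θ : FP m) (A P : Finset (Fin m)) : Prop :=
  P ∈ θ.parts ∧ P ≠ A ∧ Embraces P A ∧
    ∀ A' ∈ θ.parts, A' ≠ A → Embraces A' A → Embraces A' P

/-- `θ` has exactly two outer blocks. -/
def ExactlyTwoOuterBlocks {m : ℕ} (θ : FP m) : Prop :=
  ∃ M ∈ θ.parts, ∃ N ∈ θ.parts, M ≠ N ∧ IsOuter θ M ∧ IsOuter θ N ∧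
    ∀ A ∈ θ.parts, IsOuter θ A → A = M ∨ A = N

/-- A series in `ℂ₀⟨⟨z₁,…,z_k⟩⟩`, given by its family of coefficients: `f n w` is the
coefficient of `z_{w 0} z_{w 1} ⋯ z_{w n}` (a word of length `n+1 ≥ 1`). -/
abbrev NCSeries (k : ℕ) := (n : ℕ) → (Fin (n+1) → Fin k) → ℂ

/-- The coefficient `Cf_{w|B}(f)` of the restriction of the word `w` to the set `B`,
listing the elements of `B` in increasing order.  (Equals `1` for `B = ∅`.) -/
noncomputable def partCoeff {k m : ℕ} (f : NCSeries k) (w : Fin (m+1) → Fin k)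
    (B : Finset (Fin (m+1))) : ℂ :=
  if h : B.Nonempty then
    f (B.card - 1) (fun j =>
      w ((B.orderIsoOfFin (Nat.succ_pred_eq_of_pos (Finset.card_pos.mpr h)).symm j).1))
  else 1

/-- The generalized coefficient `Cf_{w;π}(f) = ∏_{B block of π} Cf_{w|B}(f)`. -/
noncomputable def genCoeff {k m : ℕ} (f : NCSeries k) (w : Fin (m+1) → Fin k)
    (π : FP (m+1)) : ℂ :=
  ∏ B ∈ π.parts, partCoeff f w B

/-- Linear functionals on `ℂ⟨X₁,…,X_k⟩`. -/
abbrev Dist (k : ℕ) := FreeAlgebra ℂ (Fin k) →ₗ[ℂ] ℂ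

/-- `μ ∈ D_alg(k)` : `μ` is normalized by `μ(1) = 1`. -/
def IsDalg {k : ℕ} (μ : Dist k) : Prop := μ 1 = 1

/-- The moment series `M_μ`, with `(momentSeries μ) n w = μ (X_{w 0} ⋯ X_{w n})`. -/
noncomputable def momentSeries {k : ℕ} (μ : Dist k) : NCSeries k :=
  fun _ w => μ ((List.ofFn fun j => FreeAlgebra.ι ℂ (w j)).prod)

/-- `f = R_μ` : the moments of `μ` are obtained from `f` by summation over all
non-crossing partitions. -/
def IsRTransform {k : ℕ} (μ : Dist k) (f : NCSeries k) : Prop :=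
  ∀ (n : ℕ) (w : Fin (n+1) → Fin k),
    momentSeries μ n w = ∑ π : FP (n+1), if IsNC π then genCoeff f w π else 0

/-- `g = η_μ` : the moments of `μ` are obtained from `g` by summation over all
interval partitions. -/
def IsEtaSeries {k : ℕ} (μ : Dist k) (g : NCSeries k) : Prop :=
  ∀ (n : ℕ) (w : Fin (n+1) → Fin k),
    momentSeries μ n w = ∑ π : FP (n+1), if IsIntervalPartition π then genCoeff g w π else 0

/-- `μ ∈ D_c(k)` : `μ` is the joint distribution of a `k`-tuple of selfadjoint elements
with respect to a state on a unital C*-algebra. -/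
def IsDc {k : ℕ} (μ : Dist k) : Prop :=
  IsDalg μ ∧
  ∃ (A : Type) (_ : NormedRing A) (_ : StarRing A) (_ : CStarRing A)
    (_ : NormedAlgebra ℂ A) (_ : StarModule ℂ A) (_ : CompleteSpace A)
    (φ : A →ₗ[ℂ] ℂ) (x : Fin k → A),
      φ 1 = 1 ∧ (∀ a : A, 0 ≤ φ (star a * a)) ∧ (∀ i, IsSelfAdjoint (x i)) ∧
      ∀ (n : ℕ) (w : Fin (n+1) → Fin k),
        momentSeries μ n w = φ ((List.ofFn fun j => x (w j)).prod)

/-- convergence in moments. -/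
def ConvInMoments {k : ℕ} (μseq : ℕ → Dist k) (μ : Dist k) : Prop :=
  ∀ P : FreeAlgebra ℂ (Fin k),
    Filter.Tendsto (fun N => μseq N P) Filter.atTop (nhds (μ P))

/-- coefficientwise convergence of series. -/
def ConvCoeffwise {k : ℕ} (fseq : ℕ → NCSeries k) (f : NCSeries k) : Prop :=
  ∀ (n : ℕ) (w : Fin (n+1) → Fin k),
    Filter.Tendsto (fun N => fseq N n w) Filter.atTop (nhds (f n w))

/-- `ν` is the `p`-fold free additive convolution `μ ⊞ ⋯ ⊞ μ`, i.e. `R_ν = p · R_μ`. -/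
def IsNFoldFree {k : ℕ} (p : ℕ) (μ ν : Dist k) : Prop :=
  ∃ f : NCSeries k, IsRTransform μ f ∧ IsRTransform ν (fun n w => (p : ℂ) * f n w)

/-- `ν` is the `p`-fold Boolean convolution `μ ⊎ ⋯ ⊎ μ`, i.e. `η_ν = p · η_μ`. -/
def IsNFoldBool {k : ℕ} (p : ℕ) (μ ν : Dist k) : Prop :=
  ∃ g : NCSeries k, IsEtaSeries μ g ∧ IsEtaSeries ν (fun n w => (p : ℂ) * g n w)

/-- `ν = 𝔹(μ)` : the Boolean Bercovici–Pata bijection, `R_{𝔹(μ)} = η_μ`. -/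
def IsBP {k : ℕ} (μ ν : Dist k) : Prop :=
  ∃ f : NCSeries k, IsEtaSeries μ f ∧ IsRTransform ν f

/-- `μ ∈ D_c(k)` is infinitely divisible with respect to `⊞`. -/
def IsInfDiv {k : ℕ} (μ : Dist k) : Prop :=
  IsDc μ ∧ ∀ N : ℕ, 0 < N → ∃ ν : Dist k, IsDc ν ∧ IsNFoldFree N ν μ

/-- `g = Reta(f)`, i.e. there is `μ ∈ D_alg(k)` with `f = R_μ` and `g = η_μ`. -/
def RetaRel {k : ℕ} (f g : NCSeries k) : Prop :=
  ∃ μ : Dist k, IsDalg μ ∧ IsRTransform μ f ∧ IsEtaSeries μ g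


/-- The Kreweras complement `K(π)`, selected via choice from the defining relation. -/
noncomputable def Krew {m : ℕ} (π : FP m) : FP m :=
  if h : ∃ κ : FP m, IsKrewerasPair π κ then h.choose else π

/-- The transformation `Reta`, given by its explicit combinatorial formula
`Cf_w(Reta f) = Σ_{π ∈ NC(n), π ≪ 1_n} Cf_{w;π}(f)`  (equivalently, `Reta(R_μ) = η_μ`
for every `μ ∈ D_alg(k)`). -/
noncomputable def Reta {k : ℕ} (f : NCSeries k) : NCSeries k :=
  fun n w => ∑ π : FP (n+1),
    if IsNC π ∧ Ll π (fullPart n) then genCoeff f w π else 0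

/-- The boxed convolution `f ⊡ g`, with
`Cf_w(f ⊡ g) = Σ_{π ∈ NC(n)} Cf_{w;π}(f) · Cf_{w;K(π)}(g)`. -/
noncomputable def boxConv {k : ℕ} (f g : NCSeries k) : NCSeries k :=
  fun n w => ∑ π : FP (n+1),
    if IsNC π then genCoeff f w π * genCoeff g w (Krew π) else 0

/-!
Interleave the points of a non-crossing partition `π` of `n` points with the points of its
complement. The pairs `(π, K(π))` become the non-crossing partitions of `2n` points on a circle
whose blocks do not mix the two colours and which are maximal with this property; after doubling
one point, so that a line results, maximality is the purely local condition that the arcs between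
neighbours of a block are alternating in turn.

Cutting such a partition at the points of a block yields a recursion. Let `H i` collect the words
where a letter `i` is followed by blocks of the complement, and `L i` those where it is preceded by
blocks of `π`. With `∂ᵢ` the derivatives that strip the first or last letter `i` of a word,
`H i = zᵢ · (∂ᵢ g)(L)`, `L i = (f ∂ᵢ)(H) · zᵢ`, and `f ⊡ g = f(H) = g(L)`.
If all coefficients of `g` are `1`, every complement is allowed, and `∑ᵢ L i` is `Reta f`. So with
`M = 1 / (1 - Reta f)` the system says `H i = zᵢ M`, and `f(zᵢ M) = M - 1` determines `Reta f`.

Let `H', L'` solve the system for `Reta f, Reta g`, and put `P = Reta f ⊡ Reta g` and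
`M = 1 / (1 - P)`. By the functional equation for `f` and its mirror image for `g`, the series
`H' i · M` and `L' i · M` solve the system for `f, g` with `zᵢ M` in place of `zᵢ`. By uniqueness of
solutions `H' i · M = (H i)(zⱼ M)`, whence `(f ⊡ g)(zᵢ M) = f(H' M) = M - 1`, and so
`P = Reta (f ⊡ g)`.
-/

/-- Formal power series over `R` in noncommuting variables indexed by `α`, given by their
coefficients on all words, the empty word included. -/
def WordSeries (α R : Type*) := List α → R

namespace WordSeries

@[ext] theorem ext {α R : Type*} {c d : WordSeries α R} (h : ∀ w, c w = d w) : c = d := funext h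

section Ring

variable {α R : Type*} [CommRing R]

instance : AddCommGroup (WordSeries α R) := inferInstanceAs (AddCommGroup (List α → R))

instance : Module R (WordSeries α R) := inferInstanceAs (Module R (List α → R))

@[simp] theorem zero_apply (w : List α) : (0 : WordSeries α R) w = 0 := rfl

@[simp] theorem add_apply (c d : WordSeries α R) (w : List α) : (c + d) w = c w + d w := rfl

@[simp] theorem sub_apply (c d : WordSeries α R) (w : List α) : (c - d) w = c w - d w := rfl

@[simp] theorem smul_apply (r : R) (c : WordSeries α R) (w : List α) : (r • c) w = r * c w := rfl

@[simp] theorem sum_apply {ι : Type*} (s : Finset ι) (c : ι → WordSeries α R) (w : List α) :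
    (∑ i ∈ s, c i) w = ∑ i ∈ s, c i w := Finset.sum_apply w s c

/-- The left derivative: it strips the initial letter `a` off every word beginning with `a` and
kills the other words. -/
def lderiv (a : α) : WordSeries α R →ₗ[R] WordSeries α R where
  toFun c w := c (a :: w)
  map_add' _ _ := rfl
  map_smul' _ _ := rfl

/-- The right derivative: it strips the final letter `a` off every word ending in `a` and kills
the other words. -/
def rderiv (a : α) : WordSeries α R →ₗ[R] WordSeries α R where
  toFun c w := c (w ++ [a])
  map_add' _ _ := rfl
  map_smul' _ _ := rfl

@[simp] theorem lderiv_apply (a : α) (c : WordSeries α R) (w : List α) :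
    lderiv a c w = c (a :: w) := rfl

@[simp] theorem rderiv_apply (a : α) (c : WordSeries α R) (w : List α) :
    rderiv a c w = c (w ++ [a]) := rfl

/-- The coefficient of a word in the Cauchy product of `c` and `d`, by recursion on the word. -/
def mulCoeff : List α → WordSeries α R → WordSeries α R → R
  | [], c, d => c [] * d []
  | a :: w, c, d => c [] * d (a :: w) + mulCoeff w (lderiv a c) d

instance : Mul (WordSeries α R) := ⟨fun c d w => mulCoeff w c d⟩

instance : One (WordSeries α R) := ⟨fun w => match w with | [] => 1 | _ :: _ => 0⟩

@[simp] theorem mul_nil (c d : WordSeries α R) : (c * d) [] = c [] * d [] := rfl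

theorem mul_cons (c d : WordSeries α R) (a : α) (w : List α) :
    (c * d) (a :: w) = c [] * d (a :: w) + (lderiv a c * d) w := rfl

@[simp] theorem one_nil : (1 : WordSeries α R) [] = 1 := rfl

@[simp] theorem one_cons (a : α) (w : List α) : (1 : WordSeries α R) (a :: w) = 0 := rfl

@[simp] theorem lderiv_one (a : α) : lderiv a (1 : WordSeries α R) = 0 := rfl

theorem lderiv_mul (a : α) (c d : WordSeries α R) :
    lderiv a (c * d) = c [] • lderiv a d + lderiv a c * d := rfl

protected theorem add_mul (c d e : WordSeries α R) : (c + d) * e = c * e + d * e := by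
  ext w
  induction w generalizing c d with
  | nil => simp [add_mul]
  | cons a w ih => simp only [mul_cons, map_add, add_apply, ih]; ring

protected theorem mul_add (c d e : WordSeries α R) : c * (d + e) = c * d + c * e := by
  ext w
  induction w generalizing c with
  | nil => simp [mul_add]
  | cons a w ih => simp only [mul_cons, add_apply, ih]; ring

protected theorem smul_mul_assoc (r : R) (c d : WordSeries α R) : r • c * d = r • (c * d) := by
  ext w
  induction w generalizing c with
  | nil => simp [mul_assoc]
  | cons a w ih => simp only [mul_cons, map_smul, smul_apply, ih]; ring

protected theorem mul_smul_comm (r : R) (c d : WordSeries α R) : c * r • d = r • (c * d) := by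
  ext w
  induction w generalizing c with
  | nil => simp [mul_left_comm]
  | cons a w ih => simp only [mul_cons, smul_apply, ih]; ring

protected theorem zero_mul (c : WordSeries α R) : 0 * c = 0 := by
  simpa using WordSeries.smul_mul_assoc 0 (0 : WordSeries α R) c

protected theorem mul_zero (c : WordSeries α R) : c * 0 = 0 := by
  simpa using WordSeries.mul_smul_comm 0 c 0

protected theorem one_mul (c : WordSeries α R) : 1 * c = c := by
  ext w
  cases w <;> simp [mul_cons, WordSeries.zero_mul]

protected theorem mul_one (c : WordSeries α R) : c * 1 = c := by
  ext w
  induction w generalizing c with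
  | nil => simp
  | cons a w ih => simp [mul_cons, ih]

protected theorem mul_assoc (c d e : WordSeries α R) : c * d * e = c * (d * e) := by
  ext w
  induction w generalizing c with
  | nil => simp [mul_assoc]
  | cons a w ih =>
    simp only [mul_cons, lderiv_mul, WordSeries.add_mul, WordSeries.smul_mul_assoc, add_apply,
      smul_apply, mul_nil, ih]
    ring

instance : Ring (WordSeries α R) where
  left_distrib := WordSeries.mul_add
  right_distrib := WordSeries.add_mul
  zero_mul := WordSeries.zero_mul
  mul_zero := WordSeries.mul_zero
  mul_assoc := WordSeries.mul_assoc
  one_mul := WordSeries.one_mul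
  mul_one := WordSeries.mul_one
  neg_add_cancel := neg_add_cancel
  sub_eq_add_neg := sub_eq_add_neg
  zsmul := zsmulRec

noncomputable instance : Algebra R (WordSeries α R) :=
  Algebra.ofModule WordSeries.smul_mul_assoc WordSeries.mul_smul_comm

theorem rderiv_mul (a : α) (c : WordSeries α R) {d : WordSeries α R} (hd : d [] = 0) :
    rderiv a (c * d) = c * rderiv a d := by
  ext w
  induction w generalizing c with
  | nil => simp [mul_cons, hd]
  | cons b w ih =>
    have := ih (lderiv b c)
    simp only [rderiv_apply, List.cons_append, mul_cons] at this ⊢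
    rw [this]

/-- The series consisting of the single letter `i`. -/
noncomputable def letter (i : α) : WordSeries α R := fun w => if w = [i] then 1 else 0

@[simp] theorem letter_nil (i : α) : (letter i : WordSeries α R) [] = 0 := by simp [letter]

theorem lderiv_letter (a i : α) :
    lderiv a (letter i : WordSeries α R) = if a = i then 1 else 0 := by
  ext w
  cases w <;> by_cases h : a = i <;> simp [letter, h]

theorem rderiv_letter (a i : α) :
    rderiv a (letter i : WordSeries α R) = if a = i then 1 else 0 := by
  ext w
  cases w <;> by_cases h : a = i <;> simp [letter, h]

theorem letter_mul_nil (c : WordSeries α R) (i : α) : (letter i * c : WordSeries α R) [] = 0 := by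
  simp

theorem mul_letter_nil (c : WordSeries α R) (i : α) : (c * letter i : WordSeries α R) [] = 0 := by
  simp

variable [Fintype α]

theorem lderiv_sum_letter_mul (c : α → WordSeries α R) (a : α) :
    lderiv a (∑ i, letter i * c i) = c a := by
  simp [lderiv_mul, lderiv_letter]

theorem rderiv_sum_mul_letter (c : α → WordSeries α R) (a : α) :
    rderiv a (∑ i, c i * letter i) = c a := by
  simp [rderiv_mul, rderiv_letter]

theorem eq_smul_one_add_sum_mul_letter (c : WordSeries α R) :
    c = c [] • 1 + ∑ i, rderiv i c * letter i := by
  ext w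
  obtain rfl | ⟨w, a, rfl⟩ := List.eq_nil_or_concat w
  · simp
  · have h := congrFun (rderiv_sum_mul_letter (fun i => rderiv i c) a) w
    have h1 : (1 : WordSeries α R) (w ++ [a]) = 0 := by cases w <;> rfl
    rw [List.concat_eq_append, add_apply, smul_apply, h1, mul_zero, zero_add]
    exact h.symm

end Ring

section EqUpTo

variable {α R : Type*} {n m : ℕ} {c c' d d' : WordSeries α R}

/-- Agreement of two series on all words of length less than `n`. -/
def EqUpTo (n : ℕ) (c d : WordSeries α R) : Prop := ∀ w, w.length < n → c w = d w

namespace EqUpTo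

theorem zero : EqUpTo 0 c d := fun _ hw => absurd hw (Nat.not_lt_zero _)

theorem refl (n : ℕ) (c : WordSeries α R) : EqUpTo n c c := fun _ _ => rfl

theorem symm (h : EqUpTo n c d) : EqUpTo n d c := fun w hw => (h w hw).symm

theorem trans {e : WordSeries α R} (h : EqUpTo n c d) (h' : EqUpTo n d e) : EqUpTo n c e :=
  fun w hw => (h w hw).trans (h' w hw)

theorem mono (h : EqUpTo n c d) (hm : m ≤ n) : EqUpTo m c d :=
  fun w hw => h w (hw.trans_le hm)

end EqUpTo

theorem eq_of_forall_eqUpTo (h : ∀ n, EqUpTo n c d) : c = d :=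
  ext fun w => h (w.length + 1) w w.length.lt_succ_self

theorem eq_of_eqUpTo_step {ι : Type*} {x y : ι → WordSeries α R}
    (h : ∀ n, (∀ i, EqUpTo n (x i) (y i)) → ∀ i, EqUpTo (n + 1) (x i) (y i)) : x = y := by
  have hn : ∀ n i, EqUpTo n (x i) (y i) := fun n =>
    Nat.rec (fun _ => EqUpTo.zero) h n
  exact funext fun i => eq_of_forall_eqUpTo (hn · i)

/-- An operator on families of series is contracting if agreement of the inputs up to some length
improves to agreement of the outputs up to the next length. -/
def Contracting {ι : Type*} (T : (ι → WordSeries α R) → ι → WordSeries α R) : Prop :=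
  ∀ n x y, (∀ i, EqUpTo n (x i) (y i)) → ∀ i, EqUpTo (n + 1) (T x i) (T y i)

theorem Contracting.eq_of_fixed {ι : Type*} {T : (ι → WordSeries α R) → ι → WordSeries α R}
    (hT : Contracting T) {x y : ι → WordSeries α R} (hx : T x = x) (hy : T y = y) : x = y :=
  eq_of_eqUpTo_step fun n h => by simpa only [hx, hy] using hT n x y h

variable [CommRing R]

namespace EqUpTo

theorem add (h : EqUpTo n c d) (h' : EqUpTo n c' d') : EqUpTo n (c + c') (d + d') :=
  fun w hw => by simp only [add_apply, h w hw, h' w hw]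

theorem sub (h : EqUpTo n c d) (h' : EqUpTo n c' d') : EqUpTo n (c - c') (d - d') :=
  fun w hw => by simp only [sub_apply, h w hw, h' w hw]

theorem sum {ι : Type*} {s : Finset ι} {c d : ι → WordSeries α R}
    (h : ∀ i, EqUpTo n (c i) (d i)) : EqUpTo n (∑ i ∈ s, c i) (∑ i ∈ s, d i) :=
  fun w hw => by simp only [sum_apply, h _ w hw]

theorem lderiv (h : EqUpTo (n + 1) c d) (a : α) :
    EqUpTo n (WordSeries.lderiv a c) (WordSeries.lderiv a d) :=
  fun _ hw => h _ (Nat.succ_lt_succ hw)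

theorem mul (h : EqUpTo n c c') (h' : EqUpTo n d d') : EqUpTo n (c * d) (c' * d') := by
  intro w hw
  induction w generalizing c c' n with
  | nil => rw [mul_nil, mul_nil, h [] hw, h' [] hw]
  | cons a w ih =>
    obtain _ | n := n
    · exact absurd hw (Nat.not_lt_zero _)
    rw [mul_cons, mul_cons, h [] n.succ_pos, h' _ hw,
      ih (h.lderiv a) (h'.mono n.le_succ) (Nat.lt_of_succ_lt_succ hw)]

theorem mul_of_left_nil (hc : c [] = 0) (h : EqUpTo (n + 1) c c') (h' : EqUpTo n d d') :
    EqUpTo (n + 1) (c * d) (c' * d') := by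
  have hc' : c' [] = 0 := (h [] n.succ_pos).symm.trans hc
  rintro (_ | ⟨a, w⟩) hw
  · rw [mul_nil, mul_nil, hc, hc', zero_mul, zero_mul]
  · rw [mul_cons, mul_cons, hc, hc', zero_mul, zero_mul,
      (h.lderiv a).mul h' w (Nat.lt_of_succ_lt_succ hw)]

theorem mul_of_right_nil (hd : d [] = 0) (h : EqUpTo n c c') :
    EqUpTo (n + 1) (c * d) (c' * d) := by
  intro w hw
  induction w generalizing c c' n with
  | nil => rw [mul_nil, mul_nil, hd, mul_zero, mul_zero]
  | cons a w ih =>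
    obtain _ | n := n
    · exact absurd hw (by simp)
    rw [mul_cons, mul_cons, h [] n.succ_pos, ih (h.lderiv a) (Nat.lt_of_succ_lt_succ hw)]

end EqUpTo

theorem Contracting.exists_fixed {ι : Type*} {T : (ι → WordSeries α R) → ι → WordSeries α R}
    (hT : Contracting T) : ∃ x, T x = x := by
  have iterate_eqUpTo : ∀ n m i, EqUpTo n (T^[n] 0 i) (T^[n + m] 0 i) := by
    intro n
    induction n with
    | zero => exact fun m i => EqUpTo.zero
    | succ n ih =>
      intro m
      rw [Nat.add_right_comm, Function.iterate_succ_apply', Function.iterate_succ_apply']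
      exact hT n _ _ (ih m)
  let x : ι → WordSeries α R := fun i w => T^[w.length + 1] 0 i w
  have limit_eqUpTo : ∀ n i, EqUpTo n (x i) (T^[n] 0 i) := by
    intro n i w hw
    obtain ⟨m, rfl⟩ := Nat.exists_eq_add_of_le (Nat.succ_le_of_lt hw)
    exact iterate_eqUpTo (w.length + 1) m i w w.length.lt_succ_self
  refine ⟨x, funext fun i => eq_of_forall_eqUpTo fun n => ?_⟩
  have hTx := hT n x _ (limit_eqUpTo n) i
  rw [← Function.iterate_succ_apply' T] at hTx
  exact (hTx.trans (limit_eqUpTo (n + 1) i).symm).mono n.le_succ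

end EqUpTo

section Subst

variable {α β γ R : Type*} [CommRing R]

/-- The series with its constant term removed. -/
noncomputable def dropConst (c : WordSeries β R) : WordSeries β R := c - c [] • 1

@[simp] theorem dropConst_nil (c : WordSeries β R) : dropConst c [] = 0 := by simp [dropConst]

theorem dropConst_of_nil {c : WordSeries β R} (hc : c [] = 0) : dropConst c = c := by
  simp [dropConst, hc]

theorem EqUpTo.dropConst {n : ℕ} {c d : WordSeries β R} (h : EqUpTo n c d) :
    EqUpTo n (dropConst c) (dropConst d) := by
  obtain _ | n := n
  · exact EqUpTo.zero
  · rw [WordSeries.dropConst, WordSeries.dropConst, h [] n.succ_pos]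
    exact h.sub (EqUpTo.refl _ _)

variable [Fintype α]

theorem eq_of_eq_add_sum_mul {ι : Type*} {A : α → WordSeries β R} (hA : ∀ i, A i [] = 0)
    {b x y : ι → WordSeries β R} {δ : α → ι → ι} (hx : ∀ j, x j = b j + ∑ i, A i * x (δ i j))
    (hy : ∀ j, y j = b j + ∑ i, A i * y (δ i j)) : x = y :=
  eq_of_eqUpTo_step fun n h j => by
    rw [hx, hy]
    exact (EqUpTo.refl _ _).add <| EqUpTo.sum fun _ =>
      EqUpTo.mul_of_left_nil (hA _) (EqUpTo.refl _ _) (h _)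

theorem exists_substFun (A : α → WordSeries β R) : ∃ Φ : WordSeries α R → WordSeries β R,
    (fun f => f [] • 1 + ∑ i, dropConst (A i) * Φ (lderiv i f)) = Φ :=
  Contracting.exists_fixed fun _ _ _ h _ => (EqUpTo.refl _ _).add <| EqUpTo.sum fun _ =>
    EqUpTo.mul_of_left_nil (dropConst_nil _) (EqUpTo.refl _ _) (h _)

/-- The function underlying `subst`. -/
noncomputable def substFun (A : α → WordSeries β R) : WordSeries α R → WordSeries β R :=
  (exists_substFun A).choose

theorem substFun_eq (A : α → WordSeries β R) (f : WordSeries α R) :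
    substFun A f = f [] • 1 + ∑ i, dropConst (A i) * substFun A (lderiv i f) :=
  (congrFun (exists_substFun A).choose_spec f).symm

theorem substFun_add (A : α → WordSeries β R) (f g : WordSeries α R) :
    substFun A (f + g) = substFun A f + substFun A g := by
  refine congrFun (eq_of_eq_add_sum_mul (A := fun i => dropConst (A i))
    (x := fun p : WordSeries α R × WordSeries α R => substFun A (p.1 + p.2))
    (y := fun p => substFun A p.1 + substFun A p.2) (b := fun p => (p.1 [] + p.2 []) • 1)
    (δ := fun i p => (lderiv i p.1, lderiv i p.2)) (fun i => dropConst_nil _)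
    (fun p => ?_) fun p => ?_) (f, g)
  · rw [substFun_eq]
    simp only [add_apply, map_add]
  · rw [substFun_eq A p.1, substFun_eq A p.2]
    simp only [mul_add, Finset.sum_add_distrib, add_smul]
    abel

theorem substFun_smul (A : α → WordSeries β R) (r : R) (f : WordSeries α R) :
    substFun A (r • f) = r • substFun A f := by
  refine congrFun (eq_of_eq_add_sum_mul (A := fun i => dropConst (A i))
    (x := fun f => substFun A (r • f)) (y := fun f => r • substFun A f)
    (b := fun f => (r * f []) • 1) (δ := fun i => lderiv i) (fun i => dropConst_nil _)
    (fun f => ?_) fun f => ?_) f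
  · rw [substFun_eq]
    simp only [smul_apply, map_smul]
  · rw [substFun_eq]
    simp only [smul_add, smul_smul, Finset.smul_sum, mul_smul_comm]

theorem substFun_mul (A : α → WordSeries β R) (f g : WordSeries α R) :
    substFun A (f * g) = substFun A f * substFun A g := by
  refine congrFun (eq_of_eq_add_sum_mul (A := fun i => dropConst (A i))
    (x := fun f => substFun A (f * g)) (y := fun f => substFun A f * substFun A g)
    (b := fun f => f [] • substFun A g) (δ := fun i => lderiv i) (fun i => dropConst_nil _)
    (fun f => ?_) fun f => ?_) f
  · rw [substFun_eq, substFun_eq A g]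
    simp only [lderiv_mul, substFun_add, substFun_smul, mul_nil, mul_add, mul_smul_comm, smul_add,
      smul_smul, Finset.sum_add_distrib, Finset.smul_sum, add_assoc]
  · rw [substFun_eq A f]
    simp only [add_mul, smul_mul_assoc, one_mul, Finset.sum_mul, mul_assoc]

theorem substFun_one (A : α → WordSeries β R) : substFun A 1 = 1 := by
  have substFun_zero : substFun A 0 = 0 := by simpa using substFun_smul A 0 0
  rw [substFun_eq]
  simp [substFun_zero]

/-- Substitution of the series `A i` for the letter `i`, as an algebra homomorphism. The constant
terms of the `A i` are discarded, which makes the substitution total. -/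
noncomputable def subst (A : α → WordSeries β R) : WordSeries α R →ₐ[R] WordSeries β R :=
  AlgHom.ofLinearMap ⟨⟨substFun A, substFun_add A⟩, substFun_smul A⟩ (substFun_one A)
    (substFun_mul A)

theorem subst_eq_dropConst (A : α → WordSeries β R) (f : WordSeries α R) :
    subst A f = f [] • 1 + ∑ i, dropConst (A i) * subst A (lderiv i f) :=
  substFun_eq A f

@[simp] theorem subst_nil (A : α → WordSeries β R) (f : WordSeries α R) :
    subst A f [] = f [] := by
  rw [subst_eq_dropConst]
  simp

theorem EqUpTo.subst {n : ℕ} {A B : α → WordSeries β R} (h : ∀ i, EqUpTo n (A i) (B i))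
    (f : WordSeries α R) : EqUpTo n (subst A f) (subst B f) := by
  induction n generalizing f with
  | zero => exact EqUpTo.zero
  | succ n ih =>
    rw [subst_eq_dropConst, subst_eq_dropConst]
    exact (EqUpTo.refl _ _).add <| EqUpTo.sum fun i => EqUpTo.mul_of_left_nil (dropConst_nil _)
      (h i).dropConst (ih (fun i => (h i).mono n.le_succ) _)

variable {A : α → WordSeries β R}

theorem subst_eq_sum_left (hA : ∀ i, A i [] = 0) (f : WordSeries α R) :
    subst A f = f [] • 1 + ∑ i, A i * subst A (lderiv i f) := by
  rw [subst_eq_dropConst]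
  simp only [dropConst_of_nil (hA _)]

theorem eq_subst (hA : ∀ i, A i [] = 0) {Φ : WordSeries α R → WordSeries β R}
    (hΦ : ∀ f, Φ f = f [] • 1 + ∑ i, A i * Φ (lderiv i f)) (f : WordSeries α R) :
    Φ f = subst A f :=
  congrFun (eq_of_eq_add_sum_mul (δ := fun i => lderiv i) hA hΦ (subst_eq_sum_left hA)) f

theorem subst_letter (hA : ∀ i, A i [] = 0) (i : α) : subst A (letter i) = A i := by
  rw [subst_eq_sum_left hA]
  simp [lderiv_letter, apply_ite (subst A)]

theorem subst_eq_sum_right (hA : ∀ i, A i [] = 0) (f : WordSeries α R) :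
    subst A f = f [] • 1 + ∑ i, subst A (rderiv i f) * A i := by
  conv_lhs => rw [eq_smul_one_add_sum_mul_letter f]
  simp only [map_add, map_smul, map_one, map_sum, map_mul, subst_letter hA]

theorem subst_subst [Fintype β] {B : β → WordSeries γ R} (hA : ∀ i, A i [] = 0)
    (f : WordSeries α R) :
    subst B (subst A f) = subst (fun i => subst B (A i)) f := by
  refine eq_subst (Φ := fun f => subst B (subst A f)) (by simp [hA]) (fun f => ?_) f
  rw [subst_eq_sum_left hA]
  simp only [map_add, map_smul, map_one, map_sum, map_mul]

theorem mul_subst_mul (hA : ∀ i, A i [] = 0) {u v : WordSeries β R} (huv : u * v = 1)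
    (hvu : v * u = 1) (f : WordSeries α R) :
    u * subst A f * v = subst (fun i => u * A i * v) f := by
  refine eq_subst (Φ := fun f => u * subst A f * v) (by simp [hA]) (fun f => ?_) f
  have insert_unit (i : α) (c : WordSeries β R) :
      u * (A i * c) * v = u * A i * v * (u * c * v) := by
    rw [mul_assoc (u * A i), ← mul_assoc v, ← mul_assoc v, hvu, one_mul, ← mul_assoc u,
      mul_assoc (u * A i)]
  rw [subst_eq_sum_left hA]
  simp only [mul_add, add_mul, mul_smul_comm, smul_mul_assoc, mul_one, huv, Finset.mul_sum,
    Finset.sum_mul, insert_unit]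

end Subst

section Geom

variable {α β R : Type*} [CommRing R]

/-- The series all of whose coefficients are `1`. -/
def ones : WordSeries α R := fun _ => 1

@[simp] theorem ones_nil : (ones : WordSeries α R) [] = 1 := rfl

@[simp] theorem lderiv_ones (i : α) : lderiv i (ones : WordSeries α R) = ones := rfl

@[simp] theorem rderiv_ones (i : α) : rderiv i (ones : WordSeries α R) = ones := rfl

/-- The geometric series `1 + F + F² + ⋯`. -/
noncomputable def geom (F : WordSeries β R) : WordSeries β R := subst (fun _ : Unit => F) ones

variable {F X : WordSeries β R}

theorem one_sub_mul_geom (hF : F [] = 0) : (1 - F) * geom F = 1 := by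
  have h : geom F = 1 + F * geom F := by
    simpa [geom] using subst_eq_sum_left (A := fun _ : Unit => F) (fun _ => hF) ones
  rw [sub_mul, one_mul, sub_eq_iff_eq_add, ← h]

theorem geom_mul_one_sub (hF : F [] = 0) : geom F * (1 - F) = 1 := by
  have h : geom F = 1 + geom F * F := by
    simpa [geom] using subst_eq_sum_right (A := fun _ : Unit => F) (fun _ => hF) ones
  rw [mul_sub, mul_one, sub_eq_iff_eq_add, ← h]

theorem eq_geom (hF : F [] = 0) (hX : (1 - F) * X = 1) : X = geom F :=
  (left_inv_eq_right_inv (geom_mul_one_sub hF) hX).symm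

theorem subst_geom [Fintype β] {A : β → WordSeries α R} (hF : F [] = 0) :
    subst A (geom F) = geom (subst A F) := by
  refine eq_geom (by simpa using hF) ?_
  rw [← map_one (subst A), ← map_sub, ← map_mul, one_sub_mul_geom hF]

theorem subst_ones [Fintype α] {A : α → WordSeries β R} (hA : ∀ i, A i [] = 0) :
    subst A ones = geom (∑ i, A i) := by
  refine eq_geom (by simp [hA]) ?_
  have h : subst A ones = 1 + (∑ i, A i) * subst A ones := by
    rw [Finset.sum_mul]
    simpa using subst_eq_sum_left hA ones
  rw [sub_mul, one_mul, sub_eq_iff_eq_add, ← h]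

theorem EqUpTo.geom {n : ℕ} {F G : WordSeries β R} (h : EqUpTo n F G) :
    EqUpTo n (geom F) (geom G) :=
  EqUpTo.subst (fun _ => h) _

end Geom

section BoxedConvolution

variable {α β R : Type*} [CommRing R] [Fintype α]

/-- The system of equations behind the boxed convolution of `f` and `g`, which for `Z = letter` is
`subst H f`. Here `H i` and `L i` enumerate the alternating partitions of a word obtained by
following a letter `i` with blocks of `g`, respectively preceding it with blocks of `f`. -/
structure IsBoxSystem (Z : α → WordSeries β R) (f g : WordSeries α R)
    (H L : α → WordSeries β R) : Prop where
  left_eq : ∀ i, H i = Z i * subst L (lderiv i g)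
  right_eq : ∀ i, L i = subst H (rderiv i f) * Z i

variable {Z H L H' L' : α → WordSeries β R} {f g : WordSeries α R}

/-- The operator whose fixed points are the solutions of `IsBoxSystem Z f g`. -/
noncomputable def boxStep (Z : α → WordSeries β R) (f g : WordSeries α R)
    (x : α ⊕ α → WordSeries β R) : α ⊕ α → WordSeries β R :=
  Sum.elim (fun i => Z i * subst (x ∘ Sum.inr) (lderiv i g))
    fun i => subst (x ∘ Sum.inl) (rderiv i f) * Z i

theorem isBoxSystem_iff_boxStep_eq :
    IsBoxSystem Z f g H L ↔ boxStep Z f g (Sum.elim H L) = Sum.elim H L := by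
  rw [boxStep, Sum.elim_comp_inl, Sum.elim_comp_inr, Sum.elim_eq_iff, funext_iff, funext_iff]
  exact ⟨fun h => ⟨fun i => (h.left_eq i).symm, fun i => (h.right_eq i).symm⟩,
    fun h => ⟨fun i => (h.1 i).symm, fun i => (h.2 i).symm⟩⟩

theorem contracting_boxStep (hZ : ∀ i, Z i [] = 0) : Contracting (boxStep Z f g) := by
  rintro n x y h (i | i)
  · exact EqUpTo.mul_of_left_nil (hZ i) (EqUpTo.refl _ _) (EqUpTo.subst (fun _ => h _) _)
  · exact EqUpTo.mul_of_right_nil (hZ i) (EqUpTo.subst (fun _ => h _) _)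

namespace IsBoxSystem

theorem left_nil (h : IsBoxSystem Z f g H L) (hZ : ∀ i, Z i [] = 0) (i : α) : H i [] = 0 := by
  rw [h.left_eq, mul_nil, hZ, zero_mul]

theorem right_nil (h : IsBoxSystem Z f g H L) (hZ : ∀ i, Z i [] = 0) (i : α) : L i [] = 0 := by
  rw [h.right_eq, mul_nil, hZ, mul_zero]

theorem left_unique (h : IsBoxSystem Z f g H L) (h' : IsBoxSystem Z f g H' L')
    (hZ : ∀ i, Z i [] = 0) : H = H' :=
  (Sum.elim_eq_iff.1 <| (contracting_boxStep hZ).eq_of_fixed (isBoxSystem_iff_boxStep_eq.1 h)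
    (isBoxSystem_iff_boxStep_eq.1 h')).1

theorem map_subst [Fintype β] {A : β → WordSeries β R} (h : IsBoxSystem Z f g H L)
    (hZ : ∀ i, Z i [] = 0) :
    IsBoxSystem (fun i => subst A (Z i)) f g (fun i => subst A (H i)) fun i => subst A (L i) where
  left_eq i := by rw [h.left_eq, map_mul, subst_subst (h.right_nil hZ)]
  right_eq i := by rw [h.right_eq, map_mul, subst_subst (h.left_nil hZ)]

/-- Peeling off one letter on either side turns one expression into the other. -/
theorem subst_left_eq_subst_right (h : IsBoxSystem Z f g H L) (hZ : ∀ i, Z i [] = 0)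
    (hfg : f [] = g []) : subst H f = subst L g := by
  rw [subst_eq_sum_right (h.left_nil hZ), subst_eq_sum_left (h.right_nil hZ), hfg]
  simp only [h.left_eq, ← mul_assoc, ← h.right_eq]

end IsBoxSystem

theorem exists_isBoxSystem (f g : WordSeries α R) : ∃ H L, IsBoxSystem letter f g H L := by
  obtain ⟨x, hx⟩ := (contracting_boxStep (Z := letter) (f := f) (g := g) letter_nil).exists_fixed
  rw [← Sum.elim_comp_inl_inr x] at hx
  exact ⟨_, _, isBoxSystem_iff_boxStep_eq.2 hx⟩

/-- The first component of the solution of `IsBoxSystem letter f g`. -/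
noncomputable def boxLeft (f g : WordSeries α R) : α → WordSeries α R :=
  (exists_isBoxSystem f g).choose

/-- The second component of the solution of `IsBoxSystem letter f g`. -/
noncomputable def boxRight (f g : WordSeries α R) : α → WordSeries α R :=
  (exists_isBoxSystem f g).choose_spec.choose

theorem isBoxSystem_boxLeft_boxRight (f g : WordSeries α R) :
    IsBoxSystem letter f g (boxLeft f g) (boxRight f g) :=
  (exists_isBoxSystem f g).choose_spec.choose_spec

@[simp] theorem boxLeft_nil (f g : WordSeries α R) (i : α) : boxLeft f g i [] = 0 :=
  (isBoxSystem_boxLeft_boxRight f g).left_nil letter_nil i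

@[simp] theorem boxRight_nil (f g : WordSeries α R) (i : α) : boxRight f g i [] = 0 :=
  (isBoxSystem_boxLeft_boxRight f g).right_nil letter_nil i

/-- The boxed convolution, in terms of the system `IsBoxSystem` rather than non-crossing
partitions. -/
noncomputable def boxedConv (f g : WordSeries α R) : WordSeries α R := subst (boxLeft f g) f

/-- The transformation `Reta` turning an `R`-transform into an `η`-series, in terms of the system
`IsBoxSystem` rather than non-crossing partitions. -/
noncomputable def reta (f : WordSeries α R) : WordSeries α R := ∑ i, boxRight f ones i

@[simp] theorem boxedConv_nil (f g : WordSeries α R) : boxedConv f g [] = f [] := subst_nil _ _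

@[simp] theorem reta_nil (f : WordSeries α R) : reta f [] = 0 := by simp [reta]

theorem boxedConv_eq_subst_boxRight {f g : WordSeries α R} (hfg : f [] = g []) :
    boxedConv f g = subst (boxRight f g) g :=
  (isBoxSystem_boxLeft_boxRight f g).subst_left_eq_subst_right letter_nil hfg

theorem boxLeft_ones (f : WordSeries α R) (i : α) :
    boxLeft f ones i = letter i * geom (reta f) := by
  rw [(isBoxSystem_boxLeft_boxRight f ones).left_eq, lderiv_ones,
    subst_ones (boxRight_nil f ones), reta]

theorem reta_eq_sum (f : WordSeries α R) :
    reta f = ∑ i, subst (fun j => letter j * geom (reta f)) (rderiv i f) * letter i := by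
  conv_lhs => rw [reta]
  simp only [(isBoxSystem_boxLeft_boxRight f ones).right_eq, ← boxLeft_ones]

theorem rderiv_reta (f : WordSeries α R) (i : α) :
    rderiv i (reta f) = subst (fun j => letter j * geom (reta f)) (rderiv i f) := by
  conv_lhs => rw [reta_eq_sum]
  exact rderiv_sum_mul_letter _ i

/-- With `M = 1 / (1 - η)` this is the functional equation `R(z₁ M, …, z_k M) = M - 1` between
the `R`-transform and the moment series. -/
theorem subst_letter_mul_geom_reta (hf : f [] = 0) :
    subst (fun i => letter i * geom (reta f)) f = reta f * geom (reta f) := by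
  rw [subst_eq_sum_right (letter_mul_nil _), hf, zero_smul, zero_add]
  conv_rhs => enter [1]; rw [reta_eq_sum]
  simp only [Finset.sum_mul, mul_assoc]

theorem eq_reta {P : WordSeries α R} (hf : f [] = 0) (hP : P [] = 0)
    (h : subst (fun i => letter i * geom P) f = P * geom P) : P = reta f := by
  have hP_sum : P = ∑ i, subst (fun j => letter j * geom P) (rderiv i f) * letter i := by
    rw [subst_eq_sum_right (letter_mul_nil _), hf, zero_smul, zero_add] at h
    simpa only [Finset.sum_mul, mul_assoc, geom_mul_one_sub hP, mul_one, eq_comm] using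
      congrArg (· * (1 - P)) h
  refine congrFun (eq_of_eqUpTo_step (x := fun _ : Unit => P) (y := fun _ => reta f)
    fun n ih _ => ?_) ()
  rw [hP_sum, reta_eq_sum]
  exact EqUpTo.sum fun i => EqUpTo.mul_of_right_nil (letter_nil i) <|
    EqUpTo.subst (fun _ => (EqUpTo.refl _ _).mul (ih ()).geom) _

theorem lderiv_reta (hf : f [] = 0) (i : α) :
    lderiv i (reta f) = subst (fun j => geom (reta f) * letter j) (lderiv i f) := by
  set M := geom (reta f) with hMdef
  have hM : (1 - reta f) * M = 1 := one_sub_mul_geom (reta_nil f)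
  have hM' : M * (1 - reta f) = 1 := geom_mul_one_sub (reta_nil f)
  have hsum : reta f = ∑ j, letter j * subst (fun j => M * letter j) (lderiv j f) := by
    have hconj := mul_subst_mul (letter_mul_nil M) hM' hM f
    rw [subst_letter_mul_geom_reta hf, ← hMdef] at hconj
    simp only [mul_assoc, hM', mul_one] at hconj
    rw [subst_eq_sum_left (mul_letter_nil M), hf, zero_smul, zero_add] at hconj
    simpa only [Finset.mul_sum, ← mul_assoc, hM, one_mul] using
      congrArg ((1 - reta f) * ·) hconj
  conv_lhs => rw [hsum]
  exact lderiv_sum_letter_mul _ i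

theorem subst_boxLeft_geom (hf : f [] = 0) :
    subst (boxLeft f g) (geom f) = geom (boxedConv f g) :=
  subst_geom hf

theorem subst_boxRight_geom (hfg : f [] = g []) (hg : g [] = 0) :
    subst (boxRight f g) (geom g) = geom (boxedConv f g) := by
  rw [boxedConv_eq_subst_boxRight hfg, subst_geom hg]

theorem subst_boxLeft_subst (hf : f [] = 0) (u : WordSeries α R) :
    subst (boxLeft f g) (subst (fun i => letter i * geom f) u) =
      subst (fun i => boxLeft f g i * geom (boxedConv f g)) u := by
  rw [subst_subst (letter_mul_nil _)]
  simp only [map_mul, subst_letter (boxLeft_nil _ _), subst_boxLeft_geom hf]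

theorem subst_boxRight_subst (hfg : f [] = g []) (hg : g [] = 0) (u : WordSeries α R) :
    subst (boxRight f g) (subst (fun i => geom g * letter i) u) =
      subst (fun i => geom (boxedConv f g) * boxRight f g i) u := by
  rw [subst_subst (mul_letter_nil _)]
  simp only [map_mul, subst_letter (boxRight_nil _ _), subst_boxRight_geom hfg hg]

theorem isBoxSystem_reta (f : WordSeries α R) (hg : g [] = 0) :
    IsBoxSystem (fun i => letter i * geom (boxedConv (reta f) (reta g))) f g
      (fun i => boxLeft (reta f) (reta g) i * geom (boxedConv (reta f) (reta g)))
      fun i => boxRight (reta f) (reta g) i * geom (boxedConv (reta f) (reta g)) := by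
  have hfg : reta f [] = reta g [] := by rw [reta_nil, reta_nil]
  have hsystem := isBoxSystem_boxLeft_boxRight (reta f) (reta g)
  have hP : boxedConv (reta f) (reta g) [] = 0 := by rw [boxedConv_nil, reta_nil]
  constructor <;> intro i
  · have hconj := mul_subst_mul
      (A := fun i => boxRight (reta f) (reta g) i * geom (boxedConv (reta f) (reta g))) (by simp)
      (geom_mul_one_sub hP) (one_sub_mul_geom hP) (lderiv i g)
    simp only [mul_assoc, geom_mul_one_sub hP, mul_one] at hconj
    rw [hsystem.left_eq, lderiv_reta hg, subst_boxRight_subst hfg (reta_nil g), ← hconj]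
    simp only [mul_assoc, one_sub_mul_geom hP, mul_one]
  · rw [hsystem.right_eq, rderiv_reta, subst_boxLeft_subst (reta_nil f), mul_assoc]

theorem reta_boxedConv (hf : f [] = 0) (hg : g [] = 0) :
    reta (boxedConv f g) = boxedConv (reta f) (reta g) := by
  set P := boxedConv (reta f) (reta g) with hP
  have hsystem := (isBoxSystem_boxLeft_boxRight f g).map_subst (A := fun i => letter i * geom P)
    letter_nil
  simp only [subst_letter (letter_mul_nil _)] at hsystem
  have hleft : (fun i => subst (fun j => letter j * geom P) (boxLeft f g i)) =
      fun i => boxLeft (reta f) (reta g) i * geom P :=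
    hsystem.left_unique (isBoxSystem_reta f hg) (letter_mul_nil _)
  refine (eq_reta (by simpa using hf) (by simp [hP]) ?_).symm
  calc subst (fun i => letter i * geom P) (boxedConv f g)
      = subst (fun i => boxLeft (reta f) (reta g) i * geom P) f := by
        rw [boxedConv, subst_subst (boxLeft_nil f g), hleft]
    _ = subst (boxLeft (reta f) (reta g)) (reta f * geom (reta f)) := by
        rw [← subst_boxLeft_subst (reta_nil f), subst_letter_mul_geom_reta hf]
    _ = P * geom P := by rw [map_mul, subst_boxLeft_geom (reta_nil f), hP, boxedConv]

end BoxedConvolution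

end WordSeries

namespace LinePartition

section Generic

variable {α : Type*} [DecidableEq α] {s : Finset α}

theorem eq_of_parts_subset {P Q : Finpartition s} (h : P.parts ⊆ Q.parts) : P = Q := by
  refine Finpartition.ext (h.antisymm fun B hB => ?_)
  obtain ⟨x, hx⟩ := Q.nonempty_of_mem_parts hB
  obtain ⟨C, hC, hxC⟩ := P.exists_mem (Q.subset hB hx)
  rwa [Q.eq_of_mem_parts hB (h hC) hx hxC]

theorem inter_mem_restrict_parts {t B : Finset α} {P : Finpartition s} (hts : t ⊆ s)
    (hB : B ∈ P.parts) (hBt : (B ∩ t).Nonempty) : B ∩ t ∈ (P.restrict hts).parts :=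
  Finset.mem_erase.2 ⟨hBt.ne_empty, Finset.mem_image_of_mem (· ⊓ t) hB⟩

theorem mem_restrict_parts {t B : Finset α} {P : Finpartition s} (hts : t ⊆ s) (hB : B ∈ P.parts)
    (hBt : B ⊆ t) : B ∈ (P.restrict hts).parts := by
  have h := inter_mem_restrict_parts hts hB (t := t)
  rw [Finset.inter_eq_left.2 hBt] at h
  exact h (P.nonempty_of_mem_parts hB)

end Generic

/-- `x` and `y` are consecutive elements of `B`. -/
def IsAdjacentIn (B : Finset ℕ) (x y : ℕ) : Prop :=
  x ∈ B ∧ y ∈ B ∧ x < y ∧ ∀ z ∈ B, z ≤ x ∨ y ≤ z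

theorem exists_isAdjacentIn_bracket {B : Finset ℕ} {p q z : ℕ} (hp : p ∈ B) (hq : q ∈ B)
    (hpz : p ≤ z) (hzq : z ≤ q) (hz : z ∉ B) :
    ∃ x y, IsAdjacentIn B x y ∧ p ≤ x ∧ x < z ∧ z < y ∧ y ≤ q := by
  have hne {r : ℕ} (hr : r ∈ B) : r ≠ z := fun h => hz (h ▸ hr)
  have hp' : p ∈ B.filter (· < z) := by grind
  have hq' : q ∈ B.filter (z < ·) := by grind
  have hx := Finset.max'_mem _ ⟨p, hp'⟩
  have hy := Finset.min'_mem _ ⟨q, hq'⟩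
  rw [Finset.mem_filter] at hx hy
  refine ⟨_, _, ⟨hx.1, hy.1, hx.2.trans hy.2, fun r hr => ?_⟩, Finset.le_max' _ _ hp', hx.2,
    hy.2, Finset.min'_le _ _ hq'⟩
  exact (lt_or_gt_of_ne (hne hr)).imp (fun h => Finset.le_max' _ _ (Finset.mem_filter.2 ⟨hr, h⟩))
    fun h => Finset.min'_le _ _ (Finset.mem_filter.2 ⟨hr, h⟩)

variable {s : Finset ℕ} {a b m : ℕ}

/-- Some block of `θ` jumps from `x` to `y`. -/
def HasGap (θ : Finpartition s) (x y : ℕ) : Prop := ∃ B ∈ θ.parts, IsAdjacentIn B x y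

/-- Some block of `θ` has minimum `x` and maximum `y`. -/
def HasSpan (θ : Finpartition s) (x y : ℕ) : Prop :=
  ∃ B ∈ θ.parts, IsLeast (B : Set ℕ) x ∧ IsGreatest (B : Set ℕ) y

/-- Alternating partitions of the interval `{a, …, b}`: the ends lie in one block, and the gaps
inside blocks are exactly the spans of the blocks not containing `a`. On an interval of even
length these are the unions of a non-crossing partition of the points of the parity of `a` (with
`b` in the block of `a`) and of its Kreweras complement on the remaining points. -/
structure IsAlternating (θ : Finpartition (Icc a b)) : Prop where
  right_mem_part : b ∈ θ.part a
  hasGap_iff : ∀ x y, a ≤ x → (HasGap θ x (y + 1) ↔ HasSpan θ (x + 1) y)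

theorem IsAlternating.le {θ : Finpartition (Icc a b)} (hθ : IsAlternating θ) : a ≤ b :=
  (Finset.mem_Icc.1 (θ.part_subset a hθ.right_mem_part)).1

theorem IsAlternating.part_mem {θ : Finpartition (Icc a b)} (hθ : IsAlternating θ) :
    θ.part a ∈ θ.parts :=
  θ.part_mem.2 (Finset.left_mem_Icc.2 hθ.le)

theorem IsAlternating.left_mem_part {θ : Finpartition (Icc a b)} (hθ : IsAlternating θ) :
    a ∈ θ.part a :=
  θ.mem_part_self.2 (Finset.left_mem_Icc.2 hθ.le)

theorem HasGap.bounds {θ : Finpartition (Icc a b)} {x y : ℕ} (h : HasGap θ x y) :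
    a ≤ x ∧ x < y ∧ y ≤ b := by
  obtain ⟨B, hB, hx, hy, hxy, -⟩ := h
  exact ⟨(Finset.mem_Icc.1 (θ.subset hB hx)).1, hxy, (Finset.mem_Icc.1 (θ.subset hB hy)).2⟩

theorem HasSpan.bounds {θ : Finpartition (Icc a b)} {x y : ℕ} (h : HasSpan θ x y) :
    a ≤ x ∧ x ≤ y ∧ y ≤ b := by
  obtain ⟨B, hB, hx, hy⟩ := h
  exact ⟨(Finset.mem_Icc.1 (θ.subset hB hx.1)).1, hx.2 hy.1,
    (Finset.mem_Icc.1 (θ.subset hB hy.1)).2⟩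

theorem HasSpan.right_unique {θ : Finpartition s} {x y y' : ℕ} (h : HasSpan θ x y)
    (h' : HasSpan θ x y') : y = y' := by
  obtain ⟨B, hB, hx, hy⟩ := h
  obtain ⟨B', hB', hx', hy'⟩ := h'
  obtain rfl := θ.eq_of_mem_parts hB hB' hx.1 hx'.1
  exact hy.unique hy'

theorem hasSpan_endpoints_iff {θ : Finpartition (Icc a b)} : HasSpan θ a b ↔ b ∈ θ.part a := by
  refine ⟨fun ⟨B, hB, hx, hy⟩ => θ.part_eq_of_mem hB hx.1 ▸ hy.1, fun h => ?_⟩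
  have hab := Finset.mem_Icc.1 (θ.part_subset a h)
  have hle := fun x (hx : x ∈ θ.part a) => Finset.mem_Icc.1 (θ.part_subset a hx)
  exact ⟨θ.part a, θ.part_mem.2 (Finset.left_mem_Icc.2 hab.1),
    ⟨θ.mem_part_self.2 (Finset.left_mem_Icc.2 hab.1), fun x hx => (hle x hx).1⟩,
    ⟨h, fun x hx => (hle x hx).2⟩⟩

/-- Blocks fill the gaps of one another: inside a gap there is the block spanning it, and every
other block inside the gap lies in a gap of that one. -/
theorem IsAlternating.subset_Ioo {θ : Finpartition (Icc a b)} (hθ : IsAlternating θ) {x y z : ℕ}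
    {D : Finset ℕ} (h : HasGap θ x y) (hD : D ∈ θ.parts) (hz : z ∈ D) (hxz : x < z) (hzy : z < y) :
    D ⊆ Finset.Ioo x y := by
  induction hn : y - x using Nat.strong_induction_on generalizing x y with
  | _ n ih =>
    obtain ⟨y, rfl⟩ := Nat.exists_eq_add_one_of_ne_zero (Nat.ne_zero_of_lt hzy)
    obtain ⟨C, hC, hx, hy⟩ := (hθ.hasGap_iff x y h.bounds.1).1 h
    by_cases hzC : z ∈ C
    · obtain rfl := θ.eq_of_mem_parts hC hD hzC hz
      exact fun r hr => Finset.mem_Ioo.2 ⟨hx.2 hr, Nat.lt_succ_of_le (hy.2 hr)⟩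
    · obtain ⟨x', y', hadj, hx', hxz', hzy', hy'⟩ :=
        exists_isAdjacentIn_bracket hx.1 hy.1 hxz (Nat.le_of_lt_succ hzy) hzC
      exact (ih (y' - x') (by omega) ⟨C, hC, hadj⟩ hxz' hzy' rfl).trans
        (Finset.Ioo_subset_Ioo (by omega) (by omega))

theorem IsAlternating.noncrossing {θ : Finpartition (Icc a b)} (hθ : IsAlternating θ)
    {B D : Finset ℕ} (hB : B ∈ θ.parts) (hD : D ∈ θ.parts) {i j k l : ℕ} (hij : i < j)
    (hjk : j < k) (hkl : k < l) (hi : i ∈ B) (hk : k ∈ B) (hj : j ∈ D) (hl : l ∈ D) : B = D := by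
  by_contra hne
  have hjB : j ∉ B := fun h => hne (θ.eq_of_mem_parts hB hD h hj)
  obtain ⟨x, y, hadj, -, hxj, hjy, hyk⟩ := exists_isAdjacentIn_bracket hi hk hij.le hjk.le hjB
  have := Finset.mem_Ioo.1 (hθ.subset_Ioo ⟨B, hB, hadj⟩ hD hj hxj hjy hl)
  omega

/-- The blocks of `glue`. -/
noncomputable def glueParts (a m : ℕ) {b : ℕ} (S : Finpartition (Icc (a + 1) m))
    (T : Finpartition (Icc (m + 1) b)) : Finset (Finset ℕ) :=
  S.parts ∪ insert (insert a (T.part (m + 1))) (T.parts.erase (T.part (m + 1)))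

variable {S : Finpartition (Icc (a + 1) m)} {T : Finpartition (Icc (m + 1) b)}

theorem mem_glueParts {B : Finset ℕ} : B ∈ glueParts a m S T ↔
    B ∈ S.parts ∨ B = insert a (T.part (m + 1)) ∨ B ≠ T.part (m + 1) ∧ B ∈ T.parts := by
  simp only [glueParts, Finset.mem_union, Finset.mem_insert, Finset.mem_erase]

theorem existsUnique_mem_glueParts (hm : m ∈ Ico a b) {x : ℕ} (hx : x ∈ Icc a b) :
    ∃! B ∈ glueParts a m S T, x ∈ B := by
  have hS {B} (hB : B ∈ S.parts) {y} (hy : y ∈ B) := Finset.mem_Icc.1 (S.subset hB hy)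
  have hT {B} (hB : B ∈ T.parts) {y} (hy : y ∈ B) := Finset.mem_Icc.1 (T.subset hB hy)
  rw [Finset.mem_Icc] at hx
  rw [Finset.mem_Ico] at hm
  have hT₀ : T.part (m + 1) ∈ T.parts := T.part_mem.2 (Finset.left_mem_Icc.2 hm.2)
  simp only [mem_glueParts]
  rcases Nat.lt_or_ge m x with hmx | hxm
  · obtain ⟨B, ⟨hB, hxB⟩, huniq⟩ := T.existsUnique_mem (a := x) (Finset.mem_Icc.2 (by omega))
    by_cases hB₀ : B = T.part (m + 1)
    · refine ⟨insert a (T.part (m + 1)), ⟨.inr (.inl rfl), by grind⟩, ?_⟩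
      grind
    · exact ⟨B, ⟨.inr (.inr ⟨hB₀, hB⟩), hxB⟩, by grind⟩
  · rcases hx.1.eq_or_lt with rfl | hax
    · exact ⟨insert a (T.part (m + 1)), ⟨.inr (.inl rfl), by simp⟩, by grind⟩
    · obtain ⟨B, ⟨hB, hxB⟩, huniq⟩ := S.existsUnique_mem (a := x) (Finset.mem_Icc.2 (by omega))
      exact ⟨B, ⟨.inl hB, hxB⟩, by grind⟩

theorem subset_of_mem_glueParts (hm : m ∈ Ico a b) {B : Finset ℕ} (hB : B ∈ glueParts a m S T) :
    B ⊆ Icc a b := by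
  rw [Finset.mem_Ico] at hm
  rcases mem_glueParts.1 hB with hB | rfl | ⟨-, hB⟩
  · exact (S.subset hB).trans (Finset.Icc_subset_Icc (by omega) (by omega))
  · exact Finset.insert_subset (Finset.mem_Icc.2 (by omega))
      ((T.part_subset _).trans (Finset.Icc_subset_Icc (by omega) le_rfl))
  · exact (T.subset hB).trans (Finset.Icc_subset_Icc (by omega) le_rfl)

theorem empty_notMem_glueParts : ∅ ∉ glueParts a m S T := by
  rw [mem_glueParts]
  rintro (h | h | h)
  · exact S.bot_notMem h
  · exact Finset.insert_ne_empty _ _ h.symm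
  · exact T.bot_notMem h.2

/-- The partition of `{a, …, b}` obtained from partitions of `{a + 1, …, m}` and `{m + 1, …, b}`
by adding `a` to the block of `m + 1`. -/
noncomputable def glue (hm : m ∈ Ico a b) (S : Finpartition (Icc (a + 1) m))
    (T : Finpartition (Icc (m + 1) b)) : Finpartition (Icc a b) :=
  Finpartition.ofExistsUnique (glueParts a m S T) (fun _ => subset_of_mem_glueParts hm)
    (fun _ => existsUnique_mem_glueParts hm) empty_notMem_glueParts

theorem mem_glue_parts {hm : m ∈ Ico a b} {B : Finset ℕ} : B ∈ (glue hm S T).parts ↔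
    B ∈ S.parts ∨ B = insert a (T.part (m + 1)) ∨ B ≠ T.part (m + 1) ∧ B ∈ T.parts :=
  mem_glueParts

theorem part_glue (hm : m ∈ Ico a b) : (glue hm S T).part a = insert a (T.part (m + 1)) :=
  Finpartition.part_eq_of_mem _ (mem_glue_parts.2 (.inr (.inl rfl))) (Finset.mem_insert_self _ _)

theorem isLeast_part (hm : m ∈ Ico a b) (T : Finpartition (Icc (m + 1) b)) :
    IsLeast (T.part (m + 1) : Set ℕ) (m + 1) := by
  refine ⟨T.mem_part_self.2 ?_, fun x hx => (Finset.mem_Icc.1 (T.part_subset _ hx)).1⟩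
  rw [Finset.mem_Ico] at hm
  exact Finset.left_mem_Icc.2 hm.2

theorem part_mem_parts (hm : m ∈ Ico a b) (T : Finpartition (Icc (m + 1) b)) :
    T.part (m + 1) ∈ T.parts :=
  T.part_mem.2 (T.mem_part_self.1 (isLeast_part hm T).1)

theorem isAdjacentIn_insert_iff {B : Finset ℕ} {c x y : ℕ} (hB : IsLeast (B : Set ℕ) c)
    (hac : a < c) : IsAdjacentIn (insert a B) x y ↔ x = a ∧ y = c ∨ IsAdjacentIn B x y := by
  have hc : ∀ z ∈ B, c ≤ z := fun z hz => hB.2 hz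
  have hcB : c ∈ B := hB.1
  simp only [IsAdjacentIn]
  grind

theorem hasGap_glue_iff {hm : m ∈ Ico a b} {x y : ℕ} :
    HasGap (glue hm S T) x y ↔ HasGap S x y ∨ x = a ∧ y = m + 1 ∨ HasGap T x y := by
  have hadj := @isAdjacentIn_insert_iff a _ _ x y (isLeast_part hm T)
    (Nat.lt_succ_of_le (Finset.mem_Ico.1 hm).1)
  have hT₀ := part_mem_parts hm T
  simp only [HasGap, mem_glue_parts]
  grind

theorem hasSpan_glue_iff {hm : m ∈ Ico a b} {x y : ℕ} (hax : a ≤ x) :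
    HasSpan (glue hm S T) (x + 1) y ↔ HasSpan S (x + 1) y ∨ x ≠ m ∧ HasSpan T (x + 1) y := by
  have hA : ¬ IsLeast (insert a (T.part (m + 1)) : Finset ℕ) (x + 1) := fun h => by
    have := h.2 (Finset.mem_insert_self a _)
    omega
  have hT₀ : ∀ B ∈ T.parts, IsLeast (B : Set ℕ) (x + 1) → (B ≠ T.part (m + 1) ↔ x ≠ m) := by
    refine fun B hB hx => not_congr ⟨?_, ?_⟩
    · rintro rfl
      exact Nat.succ_injective (hx.unique (isLeast_part hm T))
    · rintro rfl
      exact (T.part_eq_of_mem hB hx.1).symm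
  simp only [HasSpan, mem_glue_parts]
  grind

theorem isAlternating_glue_iff {hm : m ∈ Ico a b} :
    IsAlternating (glue hm S T) ↔ IsAlternating S ∧ IsAlternating T := by
  have hb : b ∈ (glue hm S T).part a ↔ b ∈ T.part (m + 1) := by
    rw [part_glue, Finset.mem_insert, or_iff_right]
    exact (Finset.mem_Ico.1 hm).elim (by omega)
  have hSend := hasSpan_endpoints_iff (θ := S)
  have ham := (Finset.mem_Ico.1 hm).1
  have hSgap := fun x y => HasGap.bounds (θ := S) (x := x) (y := y)
  have hTgap := fun x y => HasGap.bounds (θ := T) (x := x) (y := y)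
  have hSspan := fun x y => HasSpan.bounds (θ := S) (x := x) (y := y)
  have hTspan := fun x y => HasSpan.bounds (θ := T) (x := x) (y := y)
  have hSunique := fun y (h : HasSpan S (a + 1) y) h' => h.right_unique (y' := m) h'
  constructor
  · rintro ⟨hend, hiff⟩
    have hiff' : ∀ x y, a ≤ x → (HasGap S x (y + 1) ∨ x = a ∧ y + 1 = m + 1 ∨ HasGap T x (y + 1) ↔
        HasSpan S (x + 1) y ∨ x ≠ m ∧ HasSpan T (x + 1) y) := fun x y hx => by
      rw [← hasGap_glue_iff (hm := hm), ← hasSpan_glue_iff (hm := hm) hx, hiff x y hx]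
    refine ⟨⟨?_, fun x y hx => ?_⟩, ⟨hb.1 hend, fun x y hx => ?_⟩⟩ <;> grind
  · rintro ⟨⟨hSb, hS⟩, ⟨hTb, hT⟩⟩
    refine ⟨hb.2 hTb, fun x y hx => ?_⟩
    rw [hasGap_glue_iff, hasSpan_glue_iff hx]
    grind

theorem Icc_left_subset (hm : m ∈ Ico a b) : Icc (a + 1) m ⊆ Icc a b :=
  Finset.Icc_subset_Icc a.le_succ (Finset.mem_Ico.1 hm).2.le

theorem Icc_right_subset (hm : m ∈ Ico a b) : Icc (m + 1) b ⊆ Icc a b :=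
  Finset.Icc_subset_Icc ((Finset.mem_Ico.1 hm).1.trans m.le_succ) le_rfl

theorem restrict_glue_left (hm : m ∈ Ico a b) (S : Finpartition (Icc (a + 1) m))
    (T : Finpartition (Icc (m + 1) b)) : (glue hm S T).restrict (Icc_left_subset hm) = S :=
  (eq_of_parts_subset fun _ hB => mem_restrict_parts _ (mem_glue_parts.2 (.inl hB))
    (S.subset hB)).symm

theorem restrict_glue_right (hm : m ∈ Ico a b) (S : Finpartition (Icc (a + 1) m))
    (T : Finpartition (Icc (m + 1) b)) : (glue hm S T).restrict (Icc_right_subset hm) = T := by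
  refine (eq_of_parts_subset fun B hB => ?_).symm
  by_cases hB₀ : B = T.part (m + 1)
  · have ha : a ∉ Icc (m + 1) b := fun h =>
      (Nat.lt_succ_of_le (Finset.mem_Ico.1 hm).1).not_ge (Finset.mem_Icc.1 h).1
    have hB' : insert a B ∩ Icc (m + 1) b = B := by
      rw [Finset.insert_inter_of_notMem ha, Finset.inter_eq_left.2 (T.subset hB)]
    have h := inter_mem_restrict_parts (Icc_right_subset hm) (P := glue hm S T)
      (mem_glue_parts.2 (.inr (.inl rfl)))
    rw [← hB₀, hB'] at h
    exact h (T.nonempty_of_mem_parts hB)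
  · exact mem_restrict_parts _ (mem_glue_parts.2 (.inr (.inr ⟨hB₀, hB⟩))) (T.subset hB)

theorem glue_injective {m' : ℕ} {hm : m ∈ Ico a b} {hm' : m' ∈ Ico a b}
    {S' : Finpartition (Icc (a + 1) m')} {T' : Finpartition (Icc (m' + 1) b)}
    (h : glue hm S T = glue hm' S' T') :
    (⟨m, S, T⟩ : (n : ℕ) × Finpartition (Icc (a + 1) n) × Finpartition (Icc (n + 1) b)) =
      ⟨m', S', T'⟩ := by
  have notMem_part {n} (hn : n ∈ Ico a b) (T : Finpartition (Icc (n + 1) b)) :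
      a ∉ T.part (n + 1) := fun h =>
    (Nat.lt_succ_of_le (Finset.mem_Ico.1 hn).1).not_ge ((isLeast_part hn T).2 h)
  have hpart : T.part (m + 1) = T'.part (m' + 1) := by
    rw [← Finset.erase_insert (notMem_part hm T), ← part_glue (S := S) hm, h, part_glue,
      Finset.erase_insert (notMem_part hm' T')]
  have hleast := isLeast_part hm T
  rw [hpart] at hleast
  obtain rfl := Nat.succ_injective (hleast.unique (isLeast_part hm' T'))
  have hS : S = S' := by rw [← restrict_glue_left hm S T, h, restrict_glue_left]
  have hT : T = T' := by rw [← restrict_glue_right hm S T, h, restrict_glue_right]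
  rw [hS, hT]

theorem restrict_part (hm : m ∈ Ico a b) {θ : Finpartition (Icc a b)} (hmem : m + 1 ∈ θ.part a) :
    (θ.restrict (Icc_right_subset hm)).part (m + 1) = θ.part a ∩ Icc (m + 1) b := by
  have h : m + 1 ∈ θ.part a ∩ Icc (m + 1) b :=
    Finset.mem_inter.2 ⟨hmem, Finset.left_mem_Icc.2 (Finset.mem_Ico.1 hm).2⟩
  refine Finpartition.part_eq_of_mem _ (inter_mem_restrict_parts _ (θ.part_mem.2 ?_) ⟨_, h⟩) h
  exact Finset.left_mem_Icc.2 ((Finset.mem_Ico.1 hm).1.trans (Finset.mem_Ico.1 hm).2.le)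

theorem IsAlternating.eq_glue {θ : Finpartition (Icc a b)} (hθ : IsAlternating θ)
    (hm : m ∈ Ico a b) (hadj : IsAdjacentIn (θ.part a) a (m + 1)) :
    θ = glue hm (θ.restrict (Icc_left_subset hm)) (θ.restrict (Icc_right_subset hm)) := by
  refine eq_of_parts_subset fun B hB => mem_glue_parts.2 ?_
  have hBab := θ.subset hB
  rw [restrict_part hm hadj.2.1]
  by_cases haB : a ∈ B
  · obtain rfl := θ.part_eq_of_mem hB haB
    refine .inr (.inl (Finset.ext fun x => ?_))
    have hgap := hadj.2.2.2 x
    have hle := fun (hx : x ∈ θ.part a) => Finset.mem_Icc.1 (hBab hx)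
    grind
  by_cases hBm : B ⊆ Icc (m + 1) b
  · refine .inr (.inr ⟨?_, mem_restrict_parts _ hB hBm⟩)
    rintro rfl
    have hinter : m + 1 ∈ θ.part a ∩ Icc (m + 1) b := Finset.mem_inter.2
      ⟨hadj.2.1, Finset.left_mem_Icc.2 (Finset.mem_Ico.1 hm).2⟩
    rw [θ.eq_of_mem_parts hB hθ.part_mem hinter hadj.2.1] at haB
    exact haB hθ.left_mem_part
  · obtain ⟨z, hzB, hz⟩ := Finset.not_subset.1 hBm
    have hzab := Finset.mem_Icc.1 (hBab hzB)
    have haz : a ≠ z := fun h => haB (h ▸ hzB)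
    rw [Finset.mem_Icc] at hz
    have hsub := hθ.subset_Ioo ⟨_, hθ.part_mem, hadj⟩ hB hzB (by omega) (by omega)
    exact .inl (mem_restrict_parts _ hB fun x hx => by
      have := Finset.mem_Ioo.1 (hsub hx)
      exact Finset.mem_Icc.2 (by omega))

theorem IsAlternating.exists_glue {θ : Finpartition (Icc a b)} (hθ : IsAlternating θ)
    (hab : a < b) : ∃ (m : ℕ) (hm : m ∈ Ico a b) (S : Finpartition (Icc (a + 1) m))
      (T : Finpartition (Icc (m + 1) b)), θ = glue hm S T := by
  obtain ⟨m', hm'⟩ : ∃ m', IsLeast (((θ.part a).erase a : Finset ℕ) : Set ℕ) m' :=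
    ⟨_, Finset.isLeast_min' _ ⟨b, Finset.mem_erase.2 ⟨hab.ne', hθ.right_mem_part⟩⟩⟩
  have hm'A := Finset.mem_of_mem_erase hm'.1
  have hm'ab := Finset.mem_Icc.1 (θ.part_subset a hm'A)
  have ham' : a < m' := (Finset.mem_erase.1 hm'.1).1.symm.lt_of_le hm'ab.1
  obtain ⟨m, rfl⟩ := Nat.exists_eq_add_one_of_ne_zero (Nat.ne_zero_of_lt ham')
  have hadj : IsAdjacentIn (θ.part a) a (m + 1) := by
    refine ⟨hθ.left_mem_part, hm'A, ham', fun x hx => ?_⟩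
    exact or_iff_not_imp_left.2 fun h => hm'.2 (Finset.mem_erase.2 ⟨fun h' => h h'.le, hx⟩)
  exact ⟨m, _, _, _, hθ.eq_glue (Finset.mem_Ico.2 (by omega)) hadj⟩

theorem IsAlternating.mod_two_eq {θ : Finpartition (Icc a b)} (hθ : IsAlternating θ)
    {B : Finset ℕ} (hB : B ∈ θ.parts) {x y : ℕ} (hx : x ∈ B) (hy : y ∈ B) : x % 2 = y % 2 := by
  induction hn : b - a using Nat.strong_induction_on generalizing a b B x y with
  | _ n ih =>
    rcases hθ.le.eq_or_lt with rfl | hab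
    · have hx := θ.subset hB hx
      have hy := θ.subset hB hy
      rw [Finset.Icc_self, Finset.mem_singleton] at hx hy
      rw [hx, hy]
    obtain ⟨m, hm, S, T, rfl⟩ := hθ.exists_glue hab
    obtain ⟨hS, hT⟩ := isAlternating_glue_iff.1 hθ
    have hm' := Finset.mem_Ico.1 hm
    have ihS := @ih (m - (a + 1)) (by omega) (a + 1) m S hS
    have ihT := @ih (b - (m + 1)) (by omega) (m + 1) b T hT
    have ham := ihS hS.part_mem hS.left_mem_part hS.right_mem_part rfl
    rcases mem_glue_parts.1 hB with hB | rfl | ⟨-, hB⟩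
    · exact ihS hB hx hy rfl
    · have hT₀ {z} (hz : z ∈ insert a (T.part (m + 1))) : z % 2 = a % 2 := by
        rcases Finset.mem_insert.1 hz with rfl | hz
        · rfl
        · have := ihT hT.part_mem hz hT.left_mem_part rfl
          omega
      rw [hT₀ hx, hT₀ hy]
    · exact ihT hB hx hy rfl

section AltSum

variable {R : Type*} [CommRing R] {W₀ W₀' W : Finset ℕ → R}

/-- The weight of a partition whose blocks have weights `W`, except that the block of the left end
has weight `W₀`. -/
noncomputable def rootedWeight (W₀ W : Finset ℕ → R) (θ : Finpartition (Icc a b)) : R :=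
  W₀ (θ.part a) * ∏ B ∈ θ.parts.erase (θ.part a), W B

/-- The total `rootedWeight` of the alternating partitions of `{a, …, b}`. -/
noncomputable def altSum (W₀ W : Finset ℕ → R) (a b : ℕ) : R :=
  ∑ θ : Finpartition (Icc a b) with IsAlternating θ, rootedWeight W₀ W θ

theorem altSum_of_mod_two_ne (hab : a % 2 ≠ b % 2) : altSum W₀ W a b = 0 :=
  Finset.sum_eq_zero fun _ hθ => by
    obtain ⟨-, hθ⟩ := Finset.mem_filter.1 hθ
    exact absurd (hθ.mod_two_eq hθ.part_mem hθ.left_mem_part hθ.right_mem_part) hab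

theorem altSum_congr (h : ∀ B : Finset ℕ, B ⊆ Icc a b → (∀ x ∈ B, x % 2 = a % 2) → a ∈ B →
    W₀ B = W₀' B) : altSum W₀ W a b = altSum W₀' W a b := by
  refine Finset.sum_congr rfl fun θ hθ => ?_
  have hθ := (Finset.mem_filter.1 hθ).2
  rw [rootedWeight, rootedWeight, h _ (θ.part_subset a)
    (fun _ hx => hθ.mod_two_eq hθ.part_mem hx hθ.left_mem_part) hθ.left_mem_part]

theorem isAlternating_singleton (θ : Finpartition (Icc a a)) : IsAlternating θ := by
  have ha : a ∈ Icc a a := Finset.left_mem_Icc.2 le_rfl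
  refine ⟨θ.mem_part_self.2 ha, fun x y hx => iff_of_false (fun h => ?_) fun h => ?_⟩ <;>
    · have := h.bounds
      omega

theorem altSum_self (W₀ W : Finset ℕ → R) (a : ℕ) : altSum W₀ W a a = W₀ {a} := by
  have hpart (θ : Finpartition (Icc a a)) : θ.part a = {a} := by
    refine (Finset.subset_singleton_iff.1 ?_).resolve_left ?_
    · exact (θ.part_subset a).trans_eq (Finset.Icc_self a)
    · exact Finset.ne_empty_of_mem (isAlternating_singleton θ).left_mem_part
  have hparts (θ : Finpartition (Icc a a)) : θ.parts = {{a}} := by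
    refine Finset.eq_singleton_iff_unique_mem.2 ⟨?_, fun B hB => ?_⟩
    · exact hpart θ ▸ (isAlternating_singleton θ).part_mem
    · obtain ⟨x, hx⟩ := θ.nonempty_of_mem_parts hB
      obtain rfl := Finset.mem_singleton.1 ((θ.subset hB).trans_eq (Finset.Icc_self a) hx)
      rw [← hpart θ, θ.part_eq_of_mem hB hx]
  obtain ⟨θ, hθ⟩ : ∃ θ, (Finset.univ : Finset (Finpartition (Icc a a))) = {θ} :=
    ⟨⊥, Finset.eq_singleton_iff_unique_mem.2 ⟨Finset.mem_univ _, fun θ _ =>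
      Finpartition.ext ((hparts θ).trans (hparts ⊥).symm)⟩⟩
  rw [altSum, Finset.filter_true_of_mem fun θ _ => isAlternating_singleton θ, hθ,
    Finset.sum_singleton, rootedWeight, hpart, hparts, Finset.erase_singleton,
    Finset.prod_empty, mul_one]

theorem rootedWeight_self {θ : Finpartition (Icc a b)} (hθ : IsAlternating θ) :
    rootedWeight W W θ = ∏ B ∈ θ.parts, W B :=
  Finset.mul_prod_erase _ _ hθ.part_mem

theorem rootedWeight_glue {hm : m ∈ Ico a b} (hS : IsAlternating S) :
    rootedWeight W₀ W (glue hm S T) =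
      rootedWeight W W S * rootedWeight (fun B => W₀ (insert a B)) W T := by
  have hA : insert a (T.part (m + 1)) ∉ S.parts ∪ T.parts.erase (T.part (m + 1)) := by
    have ha : a ∈ insert a (T.part (m + 1)) := Finset.mem_insert_self _ _
    intro h
    rcases Finset.mem_union.1 h with h | h
    · have := Finset.mem_Icc.1 (S.subset h ha)
      omega
    · have := Finset.mem_Icc.1 (T.subset (Finset.mem_of_mem_erase h) ha)
      have := Finset.mem_Ico.1 hm
      omega
  have hdisj : Disjoint S.parts (T.parts.erase (T.part (m + 1))) := by
    refine Finset.disjoint_left.2 fun B hBS hBT => ?_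
    obtain ⟨x, hx⟩ := S.nonempty_of_mem_parts hBS
    have := Finset.mem_Icc.1 (S.subset hBS hx)
    have := Finset.mem_Icc.1 (T.subset (Finset.mem_of_mem_erase hBT) hx)
    omega
  have hparts : (glue hm S T).parts =
      insert (insert a (T.part (m + 1))) (S.parts ∪ T.parts.erase (T.part (m + 1))) := by
    ext B
    simp only [mem_glue_parts, Finset.mem_insert, Finset.mem_union, Finset.mem_erase]
    tauto
  rw [rootedWeight, part_glue, hparts, Finset.erase_insert hA, Finset.prod_union hdisj,
    rootedWeight_self hS, rootedWeight]
  ring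

theorem altSum_eq_sum (hab : a < b) : altSum W₀ W a b =
    ∑ m ∈ Ico a b, altSum W W (a + 1) m * altSum (fun B => W₀ (insert a B)) W (m + 1) b := by
  simp only [altSum, Finset.sum_mul_sum, ← Finset.sum_product', Finset.sum_sigma']
  symm
  refine Finset.sum_bij (fun p hp => glue (Finset.mem_sigma.1 hp).1 p.2.1 p.2.2) ?_ ?_ ?_ ?_
  · rintro ⟨m, S, T⟩ hp
    simp only [Finset.mem_sigma, Finset.mem_product, Finset.mem_filter, Finset.mem_univ,
      true_and] at hp ⊢
    exact isAlternating_glue_iff.2 hp.2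
  · exact fun _ _ _ _ h => glue_injective h
  · intro θ hθ
    have hθ := (Finset.mem_filter.1 hθ).2
    obtain ⟨m, hm, S, T, rfl⟩ := hθ.exists_glue hab
    have hST := isAlternating_glue_iff.1 hθ
    exact ⟨⟨m, S, T⟩, by simpa [hm] using hST, rfl⟩
  · rintro ⟨m, S, T⟩ hp
    simp only [Finset.mem_sigma, Finset.mem_product, Finset.mem_filter, Finset.mem_univ,
      true_and] at hp
    exact (rootedWeight_glue hp.2.1).symm

end AltSum

end LinePartition

namespace WordSeries

section Subword

variable {α R : Type*} [CommRing R]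

/-- The subword `v s, …, v (t - 1)` of the infinite word `v`. -/
def subword (v : ℕ → α) (s t : ℕ) : List α := (List.range' s (t - s)).map v

variable {v : ℕ → α} {s t : ℕ}

@[simp] theorem subword_self (v : ℕ → α) (s : ℕ) : subword v s s = [] := by simp [subword]

theorem subword_eq_cons (h : s < t) : subword v s t = v s :: subword v (s + 1) t := by
  rw [subword, subword, ← Nat.sub_add_cancel (Nat.sub_pos_of_lt h), List.range'_succ, Nat.sub_sub,
    List.map_cons]

theorem subword_succ (h : s ≤ t) : subword v s (t + 1) = subword v s t ++ [v t] := by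
  rw [subword, subword, Nat.succ_sub h, List.range'_concat, one_mul, Nat.add_sub_cancel' h,
    List.map_append, List.map_singleton]

theorem mul_subword (c d : WordSeries α R) (h : s ≤ t) :
    (c * d : WordSeries α R) (subword v s t) =
      ∑ j ∈ Icc s t, c (subword v s j) * d (subword v j t) := by
  induction hn : t - s generalizing s c with
  | zero =>
    obtain rfl := h.antisymm (Nat.sub_eq_zero_iff_le.1 hn)
    simp
  | succ n ih =>
    have hst : s < t := Nat.lt_of_sub_eq_succ hn
    rw [subword_eq_cons hst, mul_cons, ih _ hst (by omega), ← subword_eq_cons hst,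
      ← Finset.insert_Icc_succ_left_eq_Icc hst.le, Finset.sum_insert (by simp), subword_self]
    refine congrArg _ (Finset.sum_congr rfl fun j hj => ?_)
    rw [lderiv_apply, ← subword_eq_cons (Finset.mem_Icc.1 hj).1]

variable [Fintype α]

theorem lderiv_subst_boxLeft (f g c : WordSeries α R) (i : α) :
    lderiv i (subst (boxLeft f g) c) =
      subst (boxRight f g) (lderiv i g) * subst (boxLeft f g) (lderiv i c) := by
  rw [subst_eq_sum_left (boxLeft_nil f g)]
  simp only [(isBoxSystem_boxLeft_boxRight f g).left_eq, mul_assoc, map_add, map_smul, lderiv_one,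
    smul_zero, zero_add, lderiv_sum_letter_mul]

theorem subst_boxLeft_subword (f g c : WordSeries α R) (h : s < t) :
    subst (boxLeft f g) c (subword v s t) = ∑ u ∈ Ico s t,
      subst (boxRight f g) (lderiv (v s) g) (subword v (s + 1) (u + 1)) *
        subst (boxLeft f g) (lderiv (v s) c) (subword v (u + 1) t) := by
  rw [subword_eq_cons h, ← lderiv_apply (v s) (subst _ c), lderiv_subst_boxLeft,
    mul_subword _ _ (show s + 1 ≤ t from h), ← Finset.Ico_succ_right_eq_Icc,
    Order.succ_eq_add_one, ← Finset.sum_Ico_add']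

theorem boxRight_subword_succ (f g : WordSeries α R) (i : α) (h : s ≤ t) :
    boxRight f g i (subword v s (t + 1)) =
      if v t = i then subst (boxLeft f g) (rderiv i f) (subword v s t) else 0 := by
  have hrderiv : rderiv (v t) (boxRight f g i) =
      if v t = i then subst (boxLeft f g) (rderiv i f) else 0 := by
    rw [(isBoxSystem_boxLeft_boxRight f g).right_eq, rderiv_mul _ _ (letter_nil i), rderiv_letter,
      mul_ite, mul_one, mul_zero]
  rw [subword_succ h, ← rderiv_apply (v t) (boxRight f g i), hrderiv]
  split_ifs <;> rfl

theorem subst_boxRight_subword (f g c : WordSeries α R) (h : s < t) :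
    subst (boxRight f g) c (subword v s t) = ∑ u ∈ Ico s t,
      subst (boxLeft f g) (rderiv (v u) f) (subword v s u) *
        subst (boxRight f g) (lderiv (v u) c) (subword v (u + 1) t) := by
  have hterm (i : α) : (boxRight f g i * subst (boxRight f g) (lderiv i c) : WordSeries α R)
      (subword v s t) = ∑ u ∈ Ico s t, if v u = i then
        subst (boxLeft f g) (rderiv i f) (subword v s u) *
          subst (boxRight f g) (lderiv i c) (subword v (u + 1) t) else 0 := by
    rw [mul_subword _ _ h.le, ← Finset.insert_Icc_succ_left_eq_Icc h.le,
      Finset.sum_insert (by simp), subword_self, boxRight_nil, zero_mul, zero_add,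
      ← Finset.Ico_succ_right_eq_Icc, Order.succ_eq_add_one, Order.succ_eq_add_one,
      ← Finset.sum_Ico_add']
    refine Finset.sum_congr rfl fun u hu => ?_
    rw [boxRight_subword_succ _ _ _ (Finset.mem_Ico.1 hu).1, ite_mul, zero_mul]
  rw [subst_eq_sum_left (boxRight_nil f g), add_apply, smul_apply, sum_apply]
  simp only [hterm]
  rw [Finset.sum_comm, subword_eq_cons h, one_cons, mul_zero, zero_add]
  simp only [Finset.sum_ite_eq, Finset.mem_univ, if_true]

end Subword

end WordSeries

namespace LinePartition

open WordSeries

section Evaluation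

variable {α R : Type*} {v : ℕ → α} {f g : WordSeries α R} {s t : ℕ}

/-- The coefficient of `c` at the word that `B` selects from the infinite word
`v 0, v 0, v 1, v 1, …`. -/
noncomputable def blockCoeff (v : ℕ → α) (c : WordSeries α R) (B : Finset ℕ) : R :=
  c (B.sort.map fun p => v (p / 2))

@[simp] theorem blockCoeff_empty (v : ℕ → α) (c : WordSeries α R) : blockCoeff v c ∅ = c [] := by
  rw [blockCoeff, Finset.sort_empty, List.map_nil]

@[simp] theorem blockCoeff_singleton (v : ℕ → α) (c : WordSeries α R) (p : ℕ) :
    blockCoeff v c {p} = c [v (p / 2)] := by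
  rw [blockCoeff, Finset.sort_singleton, List.map_singleton]

/-- The weight of the blocks of an alternating partition: coefficients of `f` for the blocks of
even points, coefficients of `g` for the blocks of odd points. -/
noncomputable def parityCoeff (v : ℕ → α) (f g : WordSeries α R) (B : Finset ℕ) : R :=
  if ∀ x ∈ B, x % 2 = 0 then blockCoeff v f B else blockCoeff v g B

variable [CommRing R]

theorem blockCoeff_insert (c : WordSeries α R) {p : ℕ} {B : Finset ℕ} (hp : ∀ x ∈ B, p < x) :
    blockCoeff v c (insert p B) = blockCoeff v (lderiv (v (p / 2)) c) B := by
  rw [blockCoeff, Finset.sort_insert _ (fun x hx => (hp x hx).le) fun h => (hp p h).false]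
  rfl

theorem altSum_parityCoeff_even :
    altSum (parityCoeff v f g) (parityCoeff v f g) (2 * s) (2 * t) =
      altSum (blockCoeff v f) (parityCoeff v f g) (2 * s) (2 * t) :=
  altSum_congr fun B _ hB _ => if_pos fun x hx => by rw [hB x hx, Nat.mul_mod_right]

theorem altSum_parityCoeff_odd :
    altSum (parityCoeff v f g) (parityCoeff v f g) (2 * s + 1) (2 * t + 1) =
      altSum (blockCoeff v g) (parityCoeff v f g) (2 * s + 1) (2 * t + 1) :=
  altSum_congr fun B _ _ hs => if_neg fun h => by
    have := h _ hs
    omega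

theorem altSum_even_eq_sum (W₀ W : Finset ℕ → R) (h : s < t) : altSum W₀ W (2 * s) (2 * t) =
    ∑ u ∈ Ico s t, altSum W W (2 * s + 1) (2 * u + 1) *
      altSum (fun B => W₀ (insert (2 * s) B)) W (2 * (u + 1)) (2 * t) := by
  rw [altSum_eq_sum (by omega)]
  symm
  refine Finset.sum_of_injOn (2 * · + 1) (fun _ _ _ _ h => by simpa using h) (fun u hu => ?_)
    (fun m hm hmu => ?_) fun _ _ => rfl
  · simp only [Finset.coe_Ico, Set.mem_Ico] at hu ⊢
    omega
  · rw [altSum_of_mod_two_ne, zero_mul]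
    intro hpar
    rw [Finset.mem_Ico] at hm
    exact hmu ⟨m / 2, by simp only [Finset.coe_Ico, Set.mem_Ico]; omega, by dsimp only; omega⟩

theorem altSum_odd_eq_sum (W₀ W : Finset ℕ → R) (h : s < t) :
    altSum W₀ W (2 * s + 1) (2 * t + 1) =
      ∑ u ∈ Ico s t, altSum W W (2 * (s + 1)) (2 * (u + 1)) *
        altSum (fun B => W₀ (insert (2 * s + 1) B)) W (2 * (u + 1) + 1) (2 * t + 1) := by
  have hs : 2 * s + 1 + 1 = 2 * (s + 1) := by ring
  rw [altSum_eq_sum (by omega), hs]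
  symm
  refine Finset.sum_of_injOn (fun u => 2 * (u + 1)) (fun _ _ _ _ h => by simpa using h)
    (fun u hu => ?_) (fun m hm hmu => ?_) fun _ _ => rfl
  · simp only [Finset.coe_Ico, Set.mem_Ico] at hu ⊢
    omega
  · rw [altSum_of_mod_two_ne, zero_mul]
    intro hpar
    rw [Finset.mem_Ico] at hm
    exact hmu ⟨m / 2 - 1, by simp only [Finset.coe_Ico, Set.mem_Ico]; omega,
      by dsimp only; omega⟩

theorem altSum_blockCoeff_insert {W : Finset ℕ → R} {c : WordSeries α R} {p a b : ℕ}
    (hp : p < a) : altSum (fun B => blockCoeff v c (insert p B)) W a b =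
      altSum (blockCoeff v (lderiv (v (p / 2)) c)) W a b :=
  altSum_congr fun _ hB _ _ =>
    blockCoeff_insert c fun _ hx => hp.trans_le (Finset.mem_Icc.1 (hB hx)).1

theorem altSum_ite_mem_erase (v : ℕ → α) (f : WordSeries α R) (h : s ≤ t) (W₀ : Finset ℕ → R) :
    altSum (fun B => if 2 * t ∈ B then W₀ (B.erase (2 * (t + 1))) else 0)
        (parityCoeff v f ones) (2 * s) (2 * (t + 1)) =
      altSum W₀ (parityCoeff v f ones) (2 * s) (2 * t) := by
  induction hn : t - s using Nat.strong_induction_on generalizing s W₀ with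
  | _ n ih =>
    rw [altSum_even_eq_sum _ _ (Nat.lt_succ_of_le h), Finset.sum_Ico_succ_top h, altSum_self,
      altSum_parityCoeff_odd]
    rcases h.eq_or_lt with rfl | hst
    · have herase : (insert (2 * s) {2 * (s + 1)} : Finset ℕ).erase (2 * (s + 1)) = {2 * s} := by
        grind
      simp [altSum_self, herase, ones]
    have hnot : 2 * t ∉ (insert (2 * s) {2 * (t + 1)} : Finset ℕ) := by
      grind
    rw [if_neg hnot, mul_zero, add_zero, altSum_even_eq_sum _ _ hst]
    refine Finset.sum_congr rfl fun u hu => ?_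
    rw [Finset.mem_Ico] at hu
    rw [← ih _ (by omega) hu.2 _ rfl]
    refine congrArg (_ * ·) (altSum_congr fun B _ _ _ => ?_)
    rw [Finset.erase_insert_of_ne (by omega)]
    simp only [Finset.mem_insert, Nat.mul_right_inj two_ne_zero, hst.ne', false_or]

variable [Fintype α]

/-- Alternating partitions are built by splitting off the smallest point of the block of the left
end, exactly as `subst` along a solution of `IsBoxSystem` is computed letter by letter. -/
theorem altSum_blockCoeff (v : ℕ → α) (f g : WordSeries α R) (h : s ≤ t) (c : WordSeries α R) :
    altSum (blockCoeff v c) (parityCoeff v f g) (2 * s) (2 * t) =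
        subst (boxLeft f g) (rderiv (v t) c) (subword v s t) ∧
      altSum (blockCoeff v c) (parityCoeff v f g) (2 * s + 1) (2 * t + 1) =
        subst (boxRight f g) (lderiv (v s) c) (subword v (s + 1) (t + 1)) := by
  induction hn : t - s using Nat.strong_induction_on generalizing s t c with
  | _ n ih =>
    rcases h.eq_or_lt with rfl | hst
    · have hs : (2 * s + 1) / 2 = s := by omega
      simp [altSum_self, hs]
    constructor
    · rw [altSum_even_eq_sum _ _ hst, subst_boxLeft_subword _ _ _ hst]
      refine Finset.sum_congr rfl fun u hu => ?_
      rw [Finset.mem_Ico] at hu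
      rw [altSum_parityCoeff_odd, (ih _ (by omega) hu.1 g rfl).2,
        altSum_blockCoeff_insert (by omega), Nat.mul_div_right _ two_pos,
        (ih _ (by omega) hu.2 _ rfl).1]
      rfl
    · rw [altSum_odd_eq_sum _ _ hst, subst_boxRight_subword _ _ _ (show s + 1 < t + 1 by omega),
        ← Finset.sum_Ico_add']
      refine Finset.sum_congr rfl fun u hu => ?_
      rw [Finset.mem_Ico] at hu
      have hs : (2 * s + 1) / 2 = s := by omega
      rw [altSum_parityCoeff_even, (ih _ (by omega) (Nat.succ_le_succ hu.1) f rfl).1,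
        altSum_blockCoeff_insert (by omega), hs, (ih _ (by omega) hu.2 _ rfl).2]

theorem altSum_blockCoeff_erase (v : ℕ → α) (f g : WordSeries α R) (h : s ≤ t)
    (c : WordSeries α R) :
    altSum (fun B => blockCoeff v c (B.erase (2 * t))) (parityCoeff v f g) (2 * s) (2 * t) =
      subst (boxLeft f g) c (subword v s t) := by
  induction hn : t - s using Nat.strong_induction_on generalizing s c with
  | _ n ih =>
    rcases h.eq_or_lt with rfl | hst
    · simp [altSum_self]
    rw [altSum_even_eq_sum _ _ hst, subst_boxLeft_subword _ _ _ hst]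
    refine Finset.sum_congr rfl fun u hu => ?_
    rw [Finset.mem_Ico] at hu
    rw [altSum_parityCoeff_odd, (altSum_blockCoeff v f g hu.1 g).2,
      ← ih _ (by omega) hu.2 _ rfl]
    refine congrArg (_ * ·) (altSum_congr fun B hB _ _ => ?_)
    rw [Finset.erase_insert_of_ne (by omega), blockCoeff_insert, Nat.mul_div_right _ two_pos]
    intro x hx
    have := Finset.mem_Icc.1 (hB (Finset.mem_of_mem_erase hx))
    omega

theorem reta_subword_succ (v : ℕ → α) (f : WordSeries α R) (h : s ≤ t) :
    reta f (subword v s (t + 1)) = subst (boxLeft f ones) (rderiv (v t) f) (subword v s t) := by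
  rw [reta, WordSeries.sum_apply]
  simp only [boxRight_subword_succ f ones _ h, Finset.sum_ite_eq, Finset.mem_univ, if_true]

end Evaluation

end LinePartition

section CyclicSuccessor

variable {m n : ℕ}

theorem sameBlock_iff_part_eq {π : FP m} {a b : Fin m} :
    SameBlock π a b ↔ π.part a = π.part b := by
  refine ⟨fun ⟨B, hB, ha, hb⟩ => ?_, fun h => ⟨π.part a, ?_, ?_, ?_⟩⟩
  · rw [π.part_eq_of_mem hB ha, π.part_eq_of_mem hB hb]
  · exact π.part_mem.2 (Finset.mem_univ a)
  · exact π.mem_part_self.2 (Finset.mem_univ a)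
  · exact h ▸ π.mem_part_self.2 (Finset.mem_univ b)

theorem mem_part_iff {π : FP m} {a b : Fin m} : a ∈ π.part b ↔ π.part a = π.part b :=
  π.mem_part_iff_part_eq_part (Finset.mem_univ a) (Finset.mem_univ b)

/-- `c` follows `b` in the cyclic order of a block of `π`. -/
def IsNext (π : FP m) (b c : Fin m) : Prop :=
  π.part b = π.part c ∧ ((b < c ∧ ∀ x, π.part x = π.part b → x ≤ b ∨ c ≤ x) ∨
    ∀ x, π.part x = π.part b → c ≤ x ∧ x ≤ b)

theorem IsNext.right_unique {π : FP m} {b c c' : Fin m} (h : IsNext π b c) (h' : IsNext π b c') :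
    c = c' := by
  simp only [IsNext] at h h'
  grind

theorem IsNext.left_unique {π : FP m} {b b' c : Fin m} (h : IsNext π b c) (h' : IsNext π b' c) :
    b = b' := by
  simp only [IsNext] at h h'
  grind

theorem exists_isNext (π : FP m) (b : Fin m) : ∃ c, IsNext π b c := by
  have hb : b ∈ π.part b := π.mem_part_self.2 (Finset.mem_univ b)
  by_cases hlt : ((π.part b).filter (b < ·)).Nonempty
  · obtain ⟨hc, hmin⟩ := Finset.isLeast_min' _ hlt
    simp only [mem_lowerBounds, Finset.mem_coe, Finset.mem_filter, mem_part_iff] at hc hmin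
    exact ⟨_, hc.1.symm, .inl ⟨hc.2, fun x hx => (le_or_gt x b).imp_right fun h => hmin x ⟨hx, h⟩⟩⟩
  · obtain ⟨hc, hmin⟩ := Finset.isLeast_min' _ ⟨b, hb⟩
    simp only [mem_lowerBounds, Finset.mem_coe, mem_part_iff] at hc hmin
    refine ⟨_, hc.symm, .inr fun x hx => ⟨hmin x hx, not_lt.1 fun h => hlt ⟨x, ?_⟩⟩⟩
    exact Finset.mem_filter.2 ⟨mem_part_iff.2 hx, h⟩

theorem isAssocPerm_iff {π : FP m} {σ : Equiv.Perm (Fin m)} :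
    IsAssocPerm π σ ↔ ∀ b, IsNext π b (σ b) := by
  refine ⟨fun h b => ?_, fun h B hB b hb => ?_⟩
  · have hB := π.part_mem.2 (Finset.mem_univ b)
    have h := h _ hB b (π.mem_part_self.2 (Finset.mem_univ b))
    simp only [IsMaxOf, IsMinOf, mem_part_iff] at h
    unfold IsNext
    grind
  · obtain rfl := π.part_eq_of_mem hB hb
    have h := h b
    simp only [IsNext] at h
    simp only [IsMaxOf, IsMinOf, mem_part_iff]
    grind

theorem exists_isAssocPerm (π : FP m) : ∃ σ, IsAssocPerm π σ := by
  choose next hnext using exists_isNext π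
  have hinj : Function.Injective next := fun b b' h => (hnext b).left_unique (h ▸ hnext b')
  exact ⟨Equiv.ofBijective next (Finite.injective_iff_bijective.1 hinj), isAssocPerm_iff.2 hnext⟩

theorem IsAssocPerm.isNext_iff {π : FP m} {σ : Equiv.Perm (Fin m)} (h : IsAssocPerm π σ)
    {b c : Fin m} : IsNext π b c ↔ σ b = c :=
  ⟨fun hc => (isAssocPerm_iff.1 h b).right_unique hc, fun hc => hc ▸ isAssocPerm_iff.1 h b⟩

theorem isKrewerasPair_iff_imp {π κ : FP (n + 1)} :
    IsKrewerasPair π κ ↔ ∀ b c, IsNext π c (b + 1) → IsNext κ b c := by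
  refine ⟨fun ⟨σ, τ, hσ, hτ, h⟩ b c hc => ?_, fun h => ?_⟩
  · rw [hσ.isNext_iff] at hc
    rw [hτ.isNext_iff, h, Equiv.Perm.mul_apply, finRotate_apply, ← hc, Equiv.Perm.inv_eq_iff_eq]
  · obtain ⟨σ, hσ⟩ := exists_isAssocPerm π
    refine ⟨σ, σ⁻¹ * finRotate (n + 1), hσ, isAssocPerm_iff.2 fun b => h _ _ ?_, rfl⟩
    rw [hσ.isNext_iff, Equiv.Perm.mul_apply, ← Equiv.Perm.eq_inv_iff_eq, finRotate_apply]

theorem isKrewerasPair_iff {π κ : FP (n + 1)} :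
    IsKrewerasPair π κ ↔ ∀ b c, IsNext π c (b + 1) ↔ IsNext κ b c := by
  refine ⟨fun h b c => ⟨isKrewerasPair_iff_imp.1 h b c, fun hc => ?_⟩,
    fun h => isKrewerasPair_iff_imp.2 fun b c => (h b c).1⟩
  obtain ⟨σ, hσ⟩ := exists_isAssocPerm π
  have hnext : IsNext π (σ⁻¹ (b + 1)) (b + 1) := by rw [hσ.isNext_iff, ← Equiv.Perm.eq_inv_iff_eq]
  rwa [hc.right_unique (isKrewerasPair_iff_imp.1 h _ _ hnext)]

theorem part_eq_of_isNext_imp {π ρ : FP m} (h : ∀ b c, IsNext π b c → ρ.part b = ρ.part c)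
    {x y : Fin m} (hxy : π.part x = π.part y) : ρ.part x = ρ.part y := by
  wlog hle : x ≤ y generalizing x y
  · exact (this hxy.symm (le_of_not_ge hle)).symm
  induction hn : (y - x : ℕ) using Nat.strong_induction_on generalizing x with
  | _ n ih =>
    rcases hle.eq_or_lt with rfl | hlt
    · rfl
    obtain ⟨z, hz⟩ := exists_isNext π x
    have hxz : x < z ∧ z ≤ y := by
      have h := hz.2
      grind
    rw [h x z hz]
    exact ih _ (by omega) (hz.1.symm.trans hxy) hxz.2 rfl

theorem eq_of_isNext_imp {π ρ : FP m} (h : ∀ b c, IsNext π b c → IsNext ρ b c) : π = ρ := by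
  have hiff (b c : Fin m) : IsNext ρ b c → IsNext π b c := fun hc => by
    obtain ⟨c', hc'⟩ := exists_isNext π b
    rwa [hc.right_unique (h b c' hc')]
  have hpart (b : Fin m) : π.part b = ρ.part b := by
    ext x
    rw [mem_part_iff, mem_part_iff]
    exact ⟨part_eq_of_isNext_imp fun b c hc => (h b c hc).1,
      part_eq_of_isNext_imp fun b c hc => (hiff b c hc).1⟩
  refine LinePartition.eq_of_parts_subset fun B hB => ?_
  obtain ⟨x, hx⟩ := π.nonempty_of_mem_parts hB
  rw [← π.part_eq_of_mem hB hx, hpart]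
  exact ρ.part_mem.2 (Finset.mem_univ x)

theorem IsKrewerasPair.right_unique {π κ κ' : FP (n + 1)} (h : IsKrewerasPair π κ)
    (h' : IsKrewerasPair π κ') : κ = κ' :=
  eq_of_isNext_imp fun b c hc => (isKrewerasPair_iff.1 h' b c).1 ((isKrewerasPair_iff.1 h b c).2 hc)

end CyclicSuccessor

section Kreweras

variable {n : ℕ}

/-- The Kreweras complement of a noncrossing partition, in geometric terms: two points are
equivalent if no arc joining two points of a block of `π` separates them, where the point `u` of
the complement is placed just after the point `u` of `π`. -/
def complementSetoid (π : FP (n + 1)) : Setoid (Fin (n + 1)) where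
  r u v := ∀ x y, π.part x = π.part y → (x ≤ u ∧ u < y ↔ x ≤ v ∧ v < y)
  iseqv := ⟨fun _ _ _ _ => Iff.rfl, fun h x y hxy => (h x y hxy).symm,
    fun h h' x y hxy => (h x y hxy).trans (h' x y hxy)⟩

theorem IsNC.part_eq {π : FP (n + 1)} (hπ : IsNC π) {i j k l : Fin (n + 1)} (hij : i < j)
    (hjk : j < k) (hkl : k < l) (hik : π.part i = π.part k) (hjl : π.part j = π.part l) :
    π.part i = π.part j :=
  sameBlock_iff_part_eq.1 <|
    hπ i j k l hij hjk hkl (sameBlock_iff_part_eq.2 hik) (sameBlock_iff_part_eq.2 hjl)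

-- A block of `π` separating `b` from `c` would cross the arc from `c` to `b + 1`.
theorem complementSetoid_of_isNext {π : FP (n + 1)} (hπ : IsNC π) {b c : Fin (n + 1)}
    (h : IsNext π c (b + 1)) : complementSetoid π b c := by
  intro x y hxy
  obtain ⟨hpart, h⟩ := h
  have hsucc := Fin.val_add_one b
  generalize b + 1 = b' at *
  have hy := Fin.le_last y
  rcases h with ⟨hlt, hgap⟩ | hwrap
  · have hleft := fun h₁ h₂ h₃ =>
      hπ.part_eq (i := x) (j := c) (k := y) (l := b') h₁ h₂ h₃ hxy hpart
    have hright := fun h₁ h₂ h₃ =>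
      hπ.part_eq (i := c) (j := x) (k := b') (l := y) h₁ h₂ h₃ hpart hxy
    have hgapx := hgap x
    have hgapy := hgap y
    grind
  · have hleft := fun h₁ h₂ h₃ =>
      hπ.part_eq (i := x) (j := b') (k := y) (l := c) h₁ h₂ h₃ hxy hpart.symm
    have hright := fun h₁ h₂ h₃ =>
      hπ.part_eq (i := b') (j := x) (k := c) (l := y) h₁ h₂ h₃ hpart.symm hxy
    have hwrapx := hwrap x
    have hwrapy := hwrap y
    grind

theorem exists_isKrewerasPair {π : FP (n + 1)} (hπ : IsNC π) : ∃ κ, IsKrewerasPair π κ := by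
  refine ⟨Finpartition.ofSetoid (complementSetoid π), isKrewerasPair_iff_imp.2 fun b c h => ?_⟩
  have hbc := complementSetoid_of_isNext hπ h
  have hpart {x y : Fin (n + 1)} : (Finpartition.ofSetoid (complementSetoid π)).part x =
      (Finpartition.ofSetoid (complementSetoid π)).part y ↔ complementSetoid π x y := by
    rw [← mem_part_iff, Finpartition.mem_part_ofSetoid_iff_rel, Setoid.comm']
  simp only [IsNext, hpart]
  refine ⟨hbc, ?_⟩
  obtain ⟨harc, h⟩ := h
  have hsucc := Fin.val_add_one b
  have hxc := fun x (hx : complementSetoid π x b) => hx c (b + 1) harc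
  have hxc' := fun x (hx : complementSetoid π x b) => hx (b + 1) c harc.symm
  generalize b + 1 = b' at *
  by_cases hlt : b < c
  · exact .inl ⟨hlt, fun x hx => by have := hxc' x hx; grind⟩
  · exact .inr fun x hx => by have := hxc x hx; have := hxc' x hx; grind

theorem isKrewerasPair_krew {π : FP (n + 1)} (hπ : IsNC π) : IsKrewerasPair π (Krew π) := by
  have h := exists_isKrewerasPair hπ
  rw [Krew, dif_pos h]
  exact h.choose_spec

end Kreweras

section Doubling

open LinePartition

theorem LinePartition.hasGap_iff_isAdjacentIn {s : Finset ℕ} {θ : Finpartition s} {x y : ℕ} :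
    HasGap θ x y ↔ IsAdjacentIn (θ.part x) x y := by
  refine ⟨fun ⟨B, hB, h⟩ => θ.part_eq_of_mem hB h.1 ▸ h, fun h => ⟨θ.part x, ?_, h⟩⟩
  exact θ.part_mem.2 (θ.mem_part_self.1 h.1)

theorem LinePartition.hasSpan_iff_part {s : Finset ℕ} {θ : Finpartition s} {x y : ℕ} :
    HasSpan θ x y ↔ IsLeast (θ.part x : Set ℕ) x ∧ IsGreatest (θ.part x : Set ℕ) y := by
  refine ⟨fun ⟨B, hB, h⟩ => θ.part_eq_of_mem hB h.1.1 ▸ h, fun h => ⟨θ.part x, ?_, h⟩⟩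
  exact θ.part_mem.2 (θ.mem_part_self.1 h.1.1)

variable {n : ℕ}

/-- The points `2 * x` for `x ∈ B`, together with the right end `2 * (n + 1)` of the doubled
interval, which stands for the same point as `0`. -/
def evenPoints (B : Finset (Fin (n + 1))) : Finset ℕ :=
  (Icc 0 (2 * (n + 1))).filter fun p => p % 2 = 0 ∧ Fin.ofNat (n + 1) (p / 2) ∈ B

/-- The points `2 * x + 1` for `x ∈ B`. -/
def oddPoints (B : Finset (Fin (n + 1))) : Finset ℕ :=
  (Icc 0 (2 * (n + 1))).filter fun p => p % 2 = 1 ∧ Fin.ofNat (n + 1) (p / 2) ∈ B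

theorem mem_evenPoints {B : Finset (Fin (n + 1))} {p : ℕ} : p ∈ evenPoints B ↔
    p ≤ 2 * (n + 1) ∧ p % 2 = 0 ∧ Fin.ofNat (n + 1) (p / 2) ∈ B := by
  simp only [evenPoints, Finset.mem_filter, Finset.mem_Icc, zero_le, true_and]

theorem mem_oddPoints {B : Finset (Fin (n + 1))} {p : ℕ} : p ∈ oddPoints B ↔
    p ≤ 2 * (n + 1) ∧ p % 2 = 1 ∧ Fin.ofNat (n + 1) (p / 2) ∈ B := by
  simp only [oddPoints, Finset.mem_filter, Finset.mem_Icc, zero_le, true_and]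

theorem two_mul_mem_evenPoints {B : Finset (Fin (n + 1))} {x : Fin (n + 1)} :
    2 * (x : ℕ) ∈ evenPoints B ↔ x ∈ B := by
  simp only [mem_evenPoints, Nat.mul_mod_right, true_and, Nat.mul_div_cancel_left _ two_pos,
    Fin.ofNat_val_eq_self, and_iff_right_iff_imp]
  omega

theorem two_mul_add_one_mem_oddPoints {B : Finset (Fin (n + 1))} {x : Fin (n + 1)} :
    2 * (x : ℕ) + 1 ∈ oddPoints B ↔ x ∈ B := by
  have hdiv : (2 * (x : ℕ) + 1) / 2 = x := by omega
  simp only [mem_oddPoints, hdiv, Fin.ofNat_val_eq_self]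
  grind

theorem two_mul_add_two_mem_evenPoints {B : Finset (Fin (n + 1))} {x : Fin (n + 1)} :
    2 * (x : ℕ) + 2 ∈ evenPoints B ↔ x + 1 ∈ B := by
  have hdiv : (2 * (x : ℕ) + 2) / 2 = x + 1 := by omega
  have hsucc : Fin.ofNat (n + 1) (x + 1) = x + 1 := Fin.ext (by simp [Fin.val_add])
  simp only [mem_evenPoints, hdiv, hsucc]
  grind

theorem forall_mem_evenPoints {B : Finset (Fin (n + 1))} {q : ℕ → Prop} :
    (∀ p ∈ evenPoints B, q p) ↔ (∀ x ∈ B, q (2 * x)) ∧ (0 ∈ B → q (2 * (n + 1))) := by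
  refine ⟨fun h => ⟨fun x hx => h _ (two_mul_mem_evenPoints.2 hx), fun h0 => h _ ?_⟩,
    fun ⟨h, h0⟩ p hp => ?_⟩
  · simpa [mem_evenPoints] using h0
  · obtain ⟨hle, heven, hp⟩ := mem_evenPoints.1 hp
    obtain ⟨x, rfl⟩ := Nat.dvd_of_mod_eq_zero heven
    rw [Nat.mul_div_cancel_left _ two_pos] at hp
    obtain rfl | hlt := (show x ≤ n + 1 by omega).eq_or_lt
    · exact h0 (by simpa using hp)
    · simpa [Nat.mod_eq_of_lt hlt] using h _ hp

theorem forall_mem_oddPoints {B : Finset (Fin (n + 1))} {q : ℕ → Prop} :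
    (∀ p ∈ oddPoints B, q p) ↔ ∀ x ∈ B, q (2 * x + 1) := by
  refine ⟨fun h x hx => h _ (two_mul_add_one_mem_oddPoints.2 hx), fun h p hp => ?_⟩
  obtain ⟨hle, hodd, hp⟩ := mem_oddPoints.1 hp
  have hlt : p / 2 < n + 1 := by omega
  have hq := h _ hp
  rwa [Fin.val_ofNat, Nat.mod_eq_of_lt hlt, show 2 * (p / 2) + 1 = p by omega] at hq

theorem existsUnique_mem_doubled (π κ : FP (n + 1)) {p : ℕ} (hp : p ∈ Icc 0 (2 * (n + 1))) :
    ∃! B ∈ π.parts.image evenPoints ∪ κ.parts.image oddPoints, p ∈ B := by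
  have hle := (Finset.mem_Icc.1 hp).2
  simp only [Finset.mem_union, Finset.mem_image, or_and_right]
  have hhalf := Finset.mem_univ (Fin.ofNat (n + 1) (p / 2))
  rcases Nat.mod_two_eq_zero_or_one p with hparity | hparity
  · obtain ⟨B, ⟨hB, hpB⟩, huniq⟩ := π.existsUnique_mem hhalf
    refine ⟨evenPoints B, .inl ⟨⟨B, hB, rfl⟩, mem_evenPoints.2 ⟨hle, hparity, hpB⟩⟩, ?_⟩
    rintro _ (⟨⟨C, hC, rfl⟩, h⟩ | ⟨⟨C, -, rfl⟩, h⟩)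
    · rw [huniq C ⟨hC, (mem_evenPoints.1 h).2.2⟩]
    · simp [mem_oddPoints, hparity] at h
  · obtain ⟨B, ⟨hB, hpB⟩, huniq⟩ := κ.existsUnique_mem hhalf
    refine ⟨oddPoints B, .inr ⟨⟨B, hB, rfl⟩, mem_oddPoints.2 ⟨hle, hparity, hpB⟩⟩, ?_⟩
    rintro _ (⟨⟨C, -, rfl⟩, h⟩ | ⟨⟨C, hC, rfl⟩, h⟩)
    · simp [mem_evenPoints, hparity] at h
    · rw [huniq C ⟨hC, (mem_oddPoints.1 h).2.2⟩]

/-- The partition of the doubled interval with even blocks coming from `π` and odd blocks coming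
from `κ`. -/
noncomputable def doubled (π κ : FP (n + 1)) : Finpartition (Icc 0 (2 * (n + 1))) :=
  Finpartition.ofExistsUnique (π.parts.image evenPoints ∪ κ.parts.image oddPoints)
    (fun B hB => by
      rcases Finset.mem_union.1 hB with hB | hB <;> obtain ⟨B, -, rfl⟩ := Finset.mem_image.1 hB <;>
        exact Finset.filter_subset _ _)
    (fun _ => existsUnique_mem_doubled π κ)
    (fun h => by
      rcases Finset.mem_union.1 h with h | h <;> obtain ⟨B, hB, h⟩ := Finset.mem_image.1 h
      · obtain ⟨x, hx⟩ := π.nonempty_of_mem_parts hB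
        exact Finset.notMem_empty _ (h ▸ two_mul_mem_evenPoints.2 hx)
      · obtain ⟨x, hx⟩ := κ.nonempty_of_mem_parts hB
        exact Finset.notMem_empty _ (h ▸ two_mul_add_one_mem_oddPoints.2 hx))

variable {π κ : FP (n + 1)}

theorem doubled_parts : (doubled π κ).parts = π.parts.image evenPoints ∪ κ.parts.image oddPoints :=
  rfl

theorem evenPoints_mem_doubled {B : Finset (Fin (n + 1))} (hB : B ∈ π.parts) :
    evenPoints B ∈ (doubled π κ).parts :=
  Finset.mem_union_left _ (Finset.mem_image_of_mem _ hB)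

theorem oddPoints_mem_doubled {B : Finset (Fin (n + 1))} (hB : B ∈ κ.parts) :
    oddPoints B ∈ (doubled π κ).parts :=
  Finset.mem_union_right _ (Finset.mem_image_of_mem _ hB)

theorem part_doubled_two_mul (x : Fin (n + 1)) :
    (doubled π κ).part (2 * x) = evenPoints (π.part x) :=
  (doubled π κ).part_eq_of_mem (evenPoints_mem_doubled (π.part_mem.2 (Finset.mem_univ x)))
    (two_mul_mem_evenPoints.2 (π.mem_part_self.2 (Finset.mem_univ x)))

theorem part_doubled_two_mul_add_two (x : Fin (n + 1)) :
    (doubled π κ).part (2 * x + 2) = evenPoints (π.part (x + 1)) :=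
  (doubled π κ).part_eq_of_mem (evenPoints_mem_doubled (π.part_mem.2 (Finset.mem_univ (x + 1))))
    (two_mul_add_two_mem_evenPoints.2 (π.mem_part_self.2 (Finset.mem_univ (x + 1))))

theorem part_doubled_two_mul_add_one (x : Fin (n + 1)) :
    (doubled π κ).part (2 * x + 1) = oddPoints (κ.part x) :=
  (doubled π κ).part_eq_of_mem (oddPoints_mem_doubled (κ.part_mem.2 (Finset.mem_univ x)))
    (two_mul_add_one_mem_oddPoints.2 (κ.mem_part_self.2 (Finset.mem_univ x)))

theorem hasGap_doubled_even_iff {b c : Fin (n + 1)} :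
    HasGap (doubled π κ) (2 * c) (2 * b + 1 + 1) ↔ c ≤ b ∧ IsNext π c (b + 1) := by
  rw [hasGap_iff_isAdjacentIn, IsAdjacentIn, part_doubled_two_mul, two_mul_mem_evenPoints,
    two_mul_add_two_mem_evenPoints, forall_mem_evenPoints]
  simp only [mem_part_iff, IsNext]
  have hsucc := Fin.val_add_one b
  generalize b + 1 = b' at *
  by_cases hlast : b = Fin.last n
  · obtain rfl : b' = 0 := Fin.ext (by simpa [hlast] using hsucc)
    grind
  · rw [if_neg hlast] at hsucc
    constructor <;> grind

theorem hasSpan_doubled_odd_iff {b c : Fin (n + 1)} :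
    HasSpan (doubled π κ) (2 * c + 1) (2 * b + 1) ↔ c ≤ b ∧ IsNext κ b c := by
  rw [hasSpan_iff_part, part_doubled_two_mul_add_one]
  simp only [IsLeast, IsGreatest, mem_lowerBounds, mem_upperBounds, Finset.mem_coe,
    two_mul_add_one_mem_oddPoints, forall_mem_oddPoints, mem_part_iff, IsNext]
  grind

theorem hasGap_doubled_odd_iff {b c : Fin (n + 1)} :
    HasGap (doubled π κ) (2 * b + 1) (2 * c + 1) ↔ b < c ∧ IsNext κ b c := by
  rw [hasGap_iff_isAdjacentIn, IsAdjacentIn, part_doubled_two_mul_add_one]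
  simp only [two_mul_add_one_mem_oddPoints, forall_mem_oddPoints, mem_part_iff, IsNext]
  grind

theorem hasSpan_doubled_even_iff {b c : Fin (n + 1)} :
    HasSpan (doubled π κ) (2 * b + 1 + 1) (2 * c) ↔ b < c ∧ IsNext π c (b + 1) := by
  rw [hasSpan_iff_part, part_doubled_two_mul_add_two]
  simp only [IsLeast, IsGreatest, mem_lowerBounds, mem_upperBounds, Finset.mem_coe,
    two_mul_mem_evenPoints, two_mul_add_two_mem_evenPoints, forall_mem_evenPoints, mem_part_iff,
    IsNext]
  have hsucc := Fin.val_add_one b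
  generalize b + 1 = b' at *
  by_cases hlast : b = Fin.last n
  · obtain rfl : b' = 0 := Fin.ext (by simpa [hlast] using hsucc)
    grind
  · rw [if_neg hlast] at hsucc
    constructor <;> grind

theorem mod_two_eq_of_mem_doubled {B : Finset ℕ} (hB : B ∈ (doubled π κ).parts) {x y : ℕ}
    (hx : x ∈ B) (hy : y ∈ B) : x % 2 = y % 2 := by
  rw [doubled_parts, Finset.mem_union, Finset.mem_image, Finset.mem_image] at hB
  obtain ⟨B, -, rfl⟩ | ⟨B, -, rfl⟩ := hB
  · rw [(mem_evenPoints.1 hx).2.1, (mem_evenPoints.1 hy).2.1]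
  · rw [(mem_oddPoints.1 hx).2.1, (mem_oddPoints.1 hy).2.1]

theorem right_end_mem_part_doubled : 2 * (n + 1) ∈ (doubled π κ).part 0 := by
  have h0 : (doubled π κ).part 0 = evenPoints (π.part 0) := part_doubled_two_mul 0
  rw [h0, mem_evenPoints, Nat.mul_div_cancel_left _ two_pos, Fin.ofNat_self, π.mem_part_self]
  exact ⟨le_rfl, Nat.mul_mod_right 2 _, Finset.mem_univ 0⟩

theorem bounds_of_hasGap_doubled {x y : ℕ} (h : HasGap (doubled π κ) x (y + 1)) :
    x ≤ 2 * n + 1 ∧ y ≤ 2 * n + 1 ∧ x % 2 ≠ y % 2 := by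
  have hbounds := h.bounds
  obtain ⟨B, hB, hx, hy, -⟩ := h
  have hparity := mod_two_eq_of_mem_doubled hB hx hy
  omega

theorem bounds_of_hasSpan_doubled {x y : ℕ} (h : HasSpan (doubled π κ) (x + 1) y) :
    x ≤ 2 * n + 1 ∧ y ≤ 2 * n + 1 ∧ x % 2 ≠ y % 2 := by
  have hbounds := h.bounds
  obtain ⟨B, hB, hx, hy⟩ := h
  have hparity := mod_two_eq_of_mem_doubled hB hx.1 hy.1
  have hne : y ≠ 2 * (n + 1) := by
    rintro rfl
    have h0 := right_end_mem_part_doubled (π := π) (κ := κ)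
    have hB0 := (doubled π κ).eq_of_mem_parts hB ((doubled π κ).part_mem.2 (by simp)) hy.1 h0
    have := hx.2 (hB0 ▸ (doubled π κ).mem_part_self.2 (by simp) : 0 ∈ B)
    omega
  omega

theorem isAlternating_doubled (h : IsKrewerasPair π κ) : IsAlternating (doubled π κ) := by
  refine ⟨right_end_mem_part_doubled, fun x y _ => ?_⟩
  by_cases hbounds : x ≤ 2 * n + 1 ∧ y ≤ 2 * n + 1 ∧ x % 2 ≠ y % 2
  · obtain ⟨hx, hy, hxy⟩ := hbounds
    lift x / 2 to Fin (n + 1) using by omega with p hp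
    lift y / 2 to Fin (n + 1) using by omega with q hq
    rcases Nat.mod_two_eq_zero_or_one x with hparity | hparity
    · obtain rfl : x = 2 * p := by omega
      obtain rfl : y = 2 * q + 1 := by omega
      rw [hasGap_doubled_even_iff, hasSpan_doubled_odd_iff, isKrewerasPair_iff.1 h]
    · obtain rfl : x = 2 * p + 1 := by omega
      obtain rfl : y = 2 * q := by omega
      rw [hasGap_doubled_odd_iff, hasSpan_doubled_even_iff, isKrewerasPair_iff.1 h]
  · exact iff_of_false (hbounds ∘ bounds_of_hasGap_doubled) (hbounds ∘ bounds_of_hasSpan_doubled)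

theorem isKrewerasPair_of_isAlternating (h : IsAlternating (doubled π κ)) : IsKrewerasPair π κ := by
  refine isKrewerasPair_iff_imp.2 fun b c hbc => ?_
  rcases le_or_gt c b with hcb | hcb
  · exact (hasSpan_doubled_odd_iff.1 ((h.hasGap_iff (2 * c) (2 * b + 1) (Nat.zero_le _)).1
      (hasGap_doubled_even_iff.2 ⟨hcb, hbc⟩))).2
  · exact (hasGap_doubled_odd_iff.1 ((h.hasGap_iff (2 * b + 1) (2 * c) (Nat.zero_le _)).2
      (hasSpan_doubled_even_iff.2 ⟨hcb, hbc⟩))).2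

theorem isNC_of_isAlternating (h : IsAlternating (doubled π κ)) : IsNC π := by
  intro i j k l hij hjk hkl hik hjl
  rw [sameBlock_iff_part_eq] at *
  have hmem (x : Fin (n + 1)) : evenPoints (π.part x) ∈ (doubled π κ).parts :=
    evenPoints_mem_doubled (π.part_mem.2 (Finset.mem_univ x))
  have heq := h.noncrossing (hmem i) (hmem j) (i := 2 * i) (j := 2 * j) (k := 2 * k) (l := 2 * l)
    (by omega) (by omega) (by omega) (two_mul_mem_evenPoints.2 (mem_part_iff.2 rfl))
    (two_mul_mem_evenPoints.2 (mem_part_iff.2 hik.symm))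
    (two_mul_mem_evenPoints.2 (mem_part_iff.2 rfl))
    (two_mul_mem_evenPoints.2 (mem_part_iff.2 hjl.symm))
  have hi : 2 * (i : ℕ) ∈ evenPoints (π.part i) := two_mul_mem_evenPoints.2 (mem_part_iff.2 rfl)
  rwa [heq, two_mul_mem_evenPoints, mem_part_iff] at hi

theorem doubled_injective_left {π' κ' : FP (n + 1)} (h : doubled π κ = doubled π' κ') : π = π' := by
  refine eq_of_parts_subset fun B hB => ?_
  obtain ⟨x, hx⟩ := π.nonempty_of_mem_parts hB
  have heven := part_doubled_two_mul (π := π) (κ := κ) x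
  rw [h, part_doubled_two_mul, π.part_eq_of_mem hB hx] at heven
  have hpart : π'.part x = B := by
    ext y
    rw [← two_mul_mem_evenPoints, heven, two_mul_mem_evenPoints]
  exact hpart ▸ π'.part_mem.2 (Finset.mem_univ x)

theorem mem_part_iff_of_isAlternating {θ : Finpartition (Icc 0 (2 * (n + 1)))}
    (hθ : IsAlternating θ) {p q : ℕ} (hq : q ≤ 2 * (n + 1)) :
    p ∈ θ.part q ↔ p ≤ 2 * (n + 1) ∧ p % 2 = q % 2 ∧ θ.part p = θ.part q := by
  have hmem {r : ℕ} (hr : r ≤ 2 * (n + 1)) : r ∈ Icc 0 (2 * (n + 1)) := by simpa using hr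
  refine ⟨fun hp => ?_, fun ⟨hp, _, h⟩ => h ▸ θ.mem_part_self.2 (hmem hp)⟩
  have hple := (Finset.mem_Icc.1 (θ.part_subset q hp)).2
  have hpart := θ.part_mem.2 (hmem hq)
  exact ⟨hple, hθ.mod_two_eq hpart hp (θ.mem_part_self.2 (hmem hq)), θ.part_eq_of_mem hpart hp⟩

theorem part_two_mul_ofNat {θ : Finpartition (Icc 0 (2 * (n + 1)))} (hθ : IsAlternating θ) {p : ℕ}
    (hp : p ≤ 2 * (n + 1)) (heven : p % 2 = 0) :
    θ.part (2 * (Fin.ofNat (n + 1) (p / 2) : ℕ)) = θ.part p := by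
  obtain ⟨x, rfl⟩ := Nat.dvd_of_mod_eq_zero heven
  rw [Nat.mul_div_cancel_left _ two_pos, Fin.val_ofNat]
  obtain rfl | hlt := (show x ≤ n + 1 by omega).eq_or_lt
  · rw [Nat.mod_self, θ.part_eq_of_mem hθ.part_mem hθ.right_mem_part]
  · rw [Nat.mod_eq_of_lt hlt]

theorem part_two_mul_ofNat_add_one {θ : Finpartition (Icc 0 (2 * (n + 1)))} {p : ℕ}
    (hp : p ≤ 2 * (n + 1)) (hodd : p % 2 = 1) :
    θ.part (2 * (Fin.ofNat (n + 1) (p / 2) : ℕ) + 1) = θ.part p := by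
  rw [Fin.val_ofNat, Nat.mod_eq_of_lt (by omega), show 2 * (p / 2) + 1 = p by omega]

theorem exists_doubled_eq {θ : Finpartition (Icc 0 (2 * (n + 1)))} (hθ : IsAlternating θ) :
    ∃ π κ, doubled π κ = θ := by
  let even : Setoid (Fin (n + 1)) := Setoid.ker fun x => θ.part (2 * x)
  let odd : Setoid (Fin (n + 1)) := Setoid.ker fun x => θ.part (2 * x + 1)
  refine ⟨Finpartition.ofSetoid even, Finpartition.ofSetoid odd, eq_of_parts_subset fun B hB => ?_⟩
  rw [doubled_parts, Finset.mem_union, Finset.mem_image, Finset.mem_image] at hB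
  obtain ⟨B, hB, rfl⟩ | ⟨B, hB, rfl⟩ := hB <;>
    obtain ⟨x, hx⟩ := Finpartition.nonempty_of_mem_parts _ hB <;>
    rw [← Finpartition.part_eq_of_mem _ hB hx]
  · have hpart : evenPoints ((Finpartition.ofSetoid even).part x) = θ.part (2 * x) := by
      ext p
      rw [mem_evenPoints, Finpartition.mem_part_ofSetoid_iff_rel, Setoid.comm',
        mem_part_iff_of_isAlternating hθ (by omega), Nat.mul_mod_right]
      exact and_congr_right fun hp => and_congr_right fun heven =>
        (part_two_mul_ofNat hθ hp heven).congr_left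
    exact hpart ▸ θ.part_mem.2 (Finset.mem_Icc.2 ⟨Nat.zero_le _, by omega⟩)
  · have hpart : oddPoints ((Finpartition.ofSetoid odd).part x) = θ.part (2 * x + 1) := by
      ext p
      rw [mem_oddPoints, Finpartition.mem_part_ofSetoid_iff_rel, Setoid.comm',
        mem_part_iff_of_isAlternating hθ (by omega), Nat.mul_add_mod]
      exact and_congr_right fun hp => and_congr_right fun hodd =>
        (part_two_mul_ofNat_add_one hp hodd).congr_left
    exact hpart ▸ θ.part_mem.2 (Finset.mem_Icc.2 ⟨Nat.zero_le _, by omega⟩)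

theorem evenPoints_injective : Function.Injective (evenPoints (n := n)) := fun B C h => by
  ext x
  rw [← two_mul_mem_evenPoints, h, two_mul_mem_evenPoints]

theorem oddPoints_injective : Function.Injective (oddPoints (n := n)) := fun B C h => by
  ext x
  rw [← two_mul_add_one_mem_oddPoints, h, two_mul_add_one_mem_oddPoints]

theorem evenPoints_ne_oddPoints {B C : Finset (Fin (n + 1))} (hB : B.Nonempty) :
    evenPoints B ≠ oddPoints C := by
  obtain ⟨x, hx⟩ := hB
  intro h
  have hodd := (mem_oddPoints.1 (h ▸ two_mul_mem_evenPoints.2 hx)).2.1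
  omega

theorem rootedWeight_doubled {R : Type*} [CommRing R] (W₀ W : Finset ℕ → R) (π κ : FP (n + 1)) :
    rootedWeight W₀ W (doubled π κ) = W₀ (evenPoints (π.part 0)) *
      ((∏ B ∈ π.parts.erase (π.part 0), W (evenPoints B)) * ∏ B ∈ κ.parts, W (oddPoints B)) := by
  have h0 : (doubled π κ).part 0 = evenPoints (π.part 0) := part_doubled_two_mul 0
  have hπ : π.part 0 ∈ π.parts := π.part_mem.2 (Finset.mem_univ 0)
  have hne (C : Finset (Fin (n + 1))) : evenPoints (π.part 0) ≠ oddPoints C :=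
    evenPoints_ne_oddPoints (π.nonempty_of_mem_parts hπ)
  have herase : (doubled π κ).parts.erase (evenPoints (π.part 0)) =
      (π.parts.erase (π.part 0)).image evenPoints ∪ κ.parts.image oddPoints := by
    rw [doubled_parts, Finset.erase_union_distrib, Finset.image_erase evenPoints_injective,
      Finset.erase_eq_of_notMem (s := κ.parts.image oddPoints)]
    simpa using fun C _ => (hne C).symm
  have hdisj :
      Disjoint ((π.parts.erase (π.part 0)).image evenPoints) (κ.parts.image oddPoints) := by
    simp only [Finset.disjoint_left, Finset.mem_image, not_exists, not_and]
    rintro _ ⟨B, hB, rfl⟩ C _ h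
    exact evenPoints_ne_oddPoints (π.nonempty_of_mem_parts (Finset.mem_of_mem_erase hB)) h.symm
  rw [rootedWeight, h0, herase, Finset.prod_union hdisj,
    Finset.prod_image evenPoints_injective.injOn, Finset.prod_image oddPoints_injective.injOn]

theorem altSum_eq_sum_nonCrossing {R : Type*} [CommRing R] (W₀ W : Finset ℕ → R) (n : ℕ) :
    altSum W₀ W 0 (2 * (n + 1)) =
      ∑ π : FP (n + 1) with IsNC π, W₀ (evenPoints (π.part 0)) *
        ((∏ B ∈ π.parts.erase (π.part 0), W (evenPoints B)) *
          ∏ B ∈ (Krew π).parts, W (oddPoints B)) := by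
  refine (Finset.sum_bij (fun π _ => doubled π (Krew π)) (fun π hπ => ?_)
    (fun π _ π' _ => doubled_injective_left) (fun θ hθ => ?_)
    fun π _ => (rootedWeight_doubled W₀ W π (Krew π)).symm).symm
  · simp only [Finset.mem_filter, Finset.mem_univ, true_and] at hπ ⊢
    exact isAlternating_doubled (isKrewerasPair_krew hπ)
  · obtain ⟨π, κ, rfl⟩ := exists_doubled_eq (Finset.mem_filter.1 hθ).2
    have hθ := (Finset.mem_filter.1 hθ).2
    have hπ := isNC_of_isAlternating hθ
    obtain rfl := (isKrewerasPair_of_isAlternating hθ).right_unique (isKrewerasPair_krew hπ)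
    exact ⟨π, by simpa using hπ, rfl⟩

end Doubling

section Coefficients

open LinePartition WordSeries

variable {k n : ℕ}

/-- A series without constant term, as a series on all words. -/
def toWordSeries (f : NCSeries k) : WordSeries (Fin k) ℂ
  | [] => 0
  | i :: l => f l.length (i :: l).get

theorem toWordSeries_eq_of_eq_ofFn (f : NCSeries k) {l : List (Fin k)} {w : Fin (n + 1) → Fin k}
    (h : l = List.ofFn w) : toWordSeries f l = f n w := by
  cases l with
  | nil => simp at h
  | cons i l =>
    obtain rfl : l.length = n := by simpa using congrArg List.length h
    exact congrArg (f l.length) (List.ofFn_injective ((List.ofFn_get _).trans h))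

theorem toWordSeries_ofFn (f : NCSeries k) (w : Fin (n + 1) → Fin k) :
    toWordSeries f (List.ofFn w) = f n w :=
  toWordSeries_eq_of_eq_ofFn f rfl

theorem toWordSeries_injective : Function.Injective (toWordSeries (k := k)) := fun f g h => by
  funext n w
  rw [← toWordSeries_ofFn f w, h, toWordSeries_ofFn]

theorem toWordSeries_eq {f : NCSeries k} {c : WordSeries (Fin k) ℂ} (hnil : c [] = 0)
    (h : ∀ (n : ℕ) (w : Fin (n + 1) → Fin k), f n w = c (List.ofFn w)) : toWordSeries f = c :=
  WordSeries.ext fun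
    | [] => hnil.symm
    | i :: l => (h _ _).trans (by rw [List.ofFn_get])

theorem partCoeff_eq (f : NCSeries k) (w : Fin (n + 1) → Fin k) {B : Finset (Fin (n + 1))}
    (hB : B.Nonempty) : partCoeff f w B = toWordSeries f (B.sort.map w) := by
  have hcard := hB.card_pos
  rw [partCoeff, dif_pos hB]
  refine (toWordSeries_eq_of_eq_ofFn f (List.ext_getElem ?_ fun i _ _ => ?_)).symm
  · rw [List.length_ofFn, List.length_map, Finset.length_sort]
    omega
  · rw [List.getElem_ofFn, List.getElem_map, Finset.coe_orderIsoOfFin_apply,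
      Finset.orderEmbOfFin_apply]
    rfl

/-- The infinite periodic word with period `w`. -/
def periodic (w : Fin (n + 1) → Fin k) (p : ℕ) : Fin k := w (Fin.ofNat (n + 1) p)

theorem subword_periodic (w : Fin (n + 1) → Fin k) :
    subword (periodic w) 0 (n + 1) = List.ofFn w := by
  refine List.ext_getElem (by simp [subword]) fun i _ hi => ?_
  rw [List.length_ofFn] at hi
  simp only [List.getElem_ofFn, subword, List.getElem_map, List.getElem_range', zero_add, one_mul]
  exact congrArg w (Fin.ext (Nat.mod_eq_of_lt hi))

theorem blockCoeff_map (c : WordSeries (Fin k) ℂ) (w : Fin (n + 1) → Fin k)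
    (B : Finset (Fin (n + 1))) {e : Fin (n + 1) ↪ ℕ} (he : StrictMono e)
    (hhalf : ∀ x, e x / 2 = x) :
    blockCoeff (periodic w) c (B.map e) = c (B.sort.map w) := by
  rw [blockCoeff, ← (he.strictMonoOn B).map_finsetSort, List.map_map]
  refine congrArg c (List.map_congr_left fun x _ => ?_)
  rw [Function.comp_apply, hhalf, periodic, Fin.ofNat_val_eq_self]

theorem evenPoints_erase (B : Finset (Fin (n + 1))) {e : Fin (n + 1) ↪ ℕ}
    (he : ∀ x, e x = 2 * (x : ℕ)) : (evenPoints B).erase (2 * (n + 1)) = B.map e := by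
  ext p
  simp only [Finset.mem_erase, Finset.mem_map, he]
  constructor
  · rintro ⟨hne, hp⟩
    obtain ⟨hle, heven, hp⟩ := mem_evenPoints.1 hp
    exact ⟨_, hp, by rw [Fin.val_ofNat, Nat.mod_eq_of_lt (by omega)]; omega⟩
  · rintro ⟨x, hx, rfl⟩
    exact ⟨by omega, two_mul_mem_evenPoints.2 hx⟩

theorem oddPoints_eq_map (B : Finset (Fin (n + 1))) {e : Fin (n + 1) ↪ ℕ}
    (he : ∀ x, e x = 2 * (x : ℕ) + 1) : oddPoints B = B.map e := by
  ext p
  simp only [Finset.mem_map, he]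
  constructor
  · intro hp
    obtain ⟨hle, hodd, hp⟩ := mem_oddPoints.1 hp
    exact ⟨_, hp, by rw [Fin.val_ofNat, Nat.mod_eq_of_lt (by omega)]; omega⟩
  · rintro ⟨x, hx, rfl⟩
    exact two_mul_add_one_mem_oddPoints.2 hx

theorem blockCoeff_evenPoints_erase (c : WordSeries (Fin k) ℂ) (w : Fin (n + 1) → Fin k)
    (B : Finset (Fin (n + 1))) :
    blockCoeff (periodic w) c ((evenPoints B).erase (2 * (n + 1))) = c (B.sort.map w) := by
  have hmono : StrictMono fun x : Fin (n + 1) => 2 * (x : ℕ) := fun x y h => by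
    simpa using h
  rw [evenPoints_erase B (e := ⟨_, hmono.injective⟩) fun _ => rfl]
  exact blockCoeff_map c w B hmono fun x => Nat.mul_div_cancel_left _ two_pos

theorem blockCoeff_oddPoints (c : WordSeries (Fin k) ℂ) (w : Fin (n + 1) → Fin k)
    (B : Finset (Fin (n + 1))) :
    blockCoeff (periodic w) c (oddPoints B) = c (B.sort.map w) := by
  have hmono : StrictMono fun x : Fin (n + 1) => 2 * (x : ℕ) + 1 := fun x y h => by
    simpa using h
  rw [oddPoints_eq_map B (e := ⟨_, hmono.injective⟩) fun _ => rfl]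
  exact blockCoeff_map c w B hmono fun x => by dsimp only [Function.Embedding.coeFn_mk]; omega

theorem parityCoeff_evenPoints {B : Finset (Fin (n + 1))} (hB : B.Nonempty) (h0 : 0 ∉ B)
    (f : NCSeries k) (g : WordSeries (Fin k) ℂ) (w : Fin (n + 1) → Fin k) :
    parityCoeff (periodic w) (toWordSeries f) g (evenPoints B) = partCoeff f w B := by
  have hlast : 2 * (n + 1) ∉ evenPoints B := by
    rw [mem_evenPoints, Nat.mul_div_cancel_left _ two_pos, Fin.ofNat_self]
    exact fun h => h0 h.2.2
  rw [parityCoeff, if_pos fun p hp => (mem_evenPoints.1 hp).2.1, partCoeff_eq f w hB,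
    ← blockCoeff_evenPoints_erase (toWordSeries f) w B,
    Finset.erase_eq_of_notMem hlast]

theorem parityCoeff_oddPoints {B : Finset (Fin (n + 1))} (hB : B.Nonempty)
    (f g : WordSeries (Fin k) ℂ) (w : Fin (n + 1) → Fin k) :
    parityCoeff (periodic w) f g (oddPoints B) = g (B.sort.map w) := by
  obtain ⟨x, hx⟩ := hB
  have hodd : ¬∀ p ∈ oddPoints B, p % 2 = 0 := fun h => by
    have := h _ (two_mul_add_one_mem_oddPoints.2 hx)
    omega
  rw [parityCoeff, if_neg hodd, blockCoeff_oddPoints]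

/-- The block of `0` is split off because its even points include the additional right end. -/
theorem genCoeff_eq (f : NCSeries k) (g : WordSeries (Fin k) ℂ) (w : Fin (n + 1) → Fin k)
    (π : FP (n + 1)) : genCoeff f w π =
      blockCoeff (periodic w) (toWordSeries f) ((evenPoints (π.part 0)).erase (2 * (n + 1))) *
        ∏ B ∈ π.parts.erase (π.part 0),
          parityCoeff (periodic w) (toWordSeries f) g (evenPoints B) := by
  have h0 : π.part 0 ∈ π.parts := π.part_mem.2 (Finset.mem_univ 0)
  rw [genCoeff, ← Finset.mul_prod_erase _ _ h0, blockCoeff_evenPoints_erase,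
    partCoeff_eq f w (π.nonempty_of_mem_parts h0)]
  refine congrArg _ (Finset.prod_congr rfl fun B hB => ?_)
  obtain ⟨hne, hB⟩ := Finset.mem_erase.1 hB
  exact (parityCoeff_evenPoints (π.nonempty_of_mem_parts hB)
    (fun h => hne (π.part_eq_of_mem hB h).symm) f g w).symm

theorem toWordSeries_boxConv (f g : NCSeries k) :
    toWordSeries (boxConv f g) = boxedConv (toWordSeries f) (toWordSeries g) := by
  refine toWordSeries_eq (boxedConv_nil _ _) fun n w => ?_
  have hsum := altSum_blockCoeff_erase (periodic w) (toWordSeries f) (toWordSeries g)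
    (Nat.zero_le (n + 1)) (toWordSeries f)
  rw [subword_periodic, mul_zero, altSum_eq_sum_nonCrossing, Finset.sum_filter] at hsum
  rw [boxedConv, ← hsum, boxConv]
  refine Finset.sum_congr rfl fun π _ => if_congr Iff.rfl ?_ rfl
  rw [← mul_assoc, ← genCoeff_eq, genCoeff]
  refine congrArg _ (Finset.prod_congr rfl fun B hB => ?_)
  have hne := (Krew π).nonempty_of_mem_parts hB
  rw [parityCoeff_oddPoints hne, partCoeff_eq g w hne]

theorem ll_fullPart_iff {π : FP (n + 1)} : Ll π (fullPart n) ↔ SameBlock π 0 (Fin.last n) := by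
  have hparts : (fullPart n).parts = {Finset.univ} := rfl
  simp only [Ll, Refines, hparts, Finset.mem_singleton, forall_eq, exists_eq_left,
    Finset.subset_univ, implies_true, true_and, IsMinOf, IsMaxOf, Finset.mem_univ, forall_const]
  refine exists_congr fun B => and_congr_right fun _ => ⟨?_, fun ⟨h0, hn⟩ =>
    ⟨0, Fin.last n, Fin.zero_le, Fin.le_last, h0, hn⟩⟩
  rintro ⟨x, y, hx, hy, hxB, hyB⟩
  obtain rfl := Fin.le_zero_iff.1 (hx 0)
  obtain rfl := Fin.last_le_iff.1 (hy (Fin.last n))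
  exact ⟨hxB, hyB⟩

theorem ll_fullPart_iff_mem_evenPoints {π : FP (n + 1)} :
    Ll π (fullPart n) ↔ 2 * n ∈ evenPoints (π.part 0) := by
  have hlast : 2 * n ∈ evenPoints (π.part 0) ↔ Fin.last n ∈ π.part 0 :=
    two_mul_mem_evenPoints (x := Fin.last n)
  rw [ll_fullPart_iff, sameBlock_iff_part_eq, hlast, mem_part_iff, eq_comm]

theorem toWordSeries_reta (f : NCSeries k) : toWordSeries (Reta f) = reta (toWordSeries f) := by
  refine toWordSeries_eq (reta_nil _) fun n w => ?_
  have hsum := altSum_ite_mem_erase (periodic w) (toWordSeries f) (Nat.zero_le n)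
    (blockCoeff (periodic w) (toWordSeries f))
  rw [(altSum_blockCoeff _ _ _ (Nat.zero_le n) _).1, ← reta_subword_succ _ _ (Nat.zero_le n),
    subword_periodic, mul_zero, altSum_eq_sum_nonCrossing, Finset.sum_filter] at hsum
  rw [← hsum, Reta]
  refine Finset.sum_congr rfl fun π _ => ?_
  have hodd : ∏ B ∈ (Krew π).parts,
      parityCoeff (periodic w) (toWordSeries f) ones (oddPoints B) = 1 :=
    Finset.prod_eq_one fun B hB =>
      parityCoeff_oddPoints ((Krew π).nonempty_of_mem_parts hB) _ _ w
  rw [ite_and, hodd, mul_one, ite_mul, zero_mul, ← genCoeff_eq]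
  exact if_congr Iff.rfl (if_congr ll_fullPart_iff_mem_evenPoints rfl rfl) rfl

end Coefficients

/-- Theorem 7.2 / Theorem 2': `Reta` is a homomorphism for the boxed
convolution: `Reta (f ⊡ g) = Reta f ⊡ Reta g`.  (Equivalently, in terms of
distributions, `η_{μ ⊠ ν} = η_μ ⊡ η_ν` for all `μ, ν ∈ D_alg(k)`.) -/
theorem statement19 (k : ℕ) (hk : 0 < k) (f g : NCSeries k) :
    Reta (boxConv f g) = boxConv (Reta f) (Reta g) := by
  apply toWordSeries_injective
  rw [toWordSeries_reta, toWordSeries_boxConv, toWordSeries_boxConv, toWordSeries_reta,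
    toWordSeries_reta, WordSeries.reta_boxedConv rfl rfl]

end BBP
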